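/- arXiv:1702.08193 — 6 statements merged into one kernel-verified Lean document; each statement's English description precedes it below -/
import Mathlib

section
/- For every 𝒜 ⊆ {M, C, N}, the linear nested sequent calculus LNS_E𝒜ConW is complete with respect to the non-normal modal logic E𝒜: if A ∈ E𝒜 then the linear nested sequent ⇒ A is derivable in LNS_E𝒜ConW. -/
/-- Monomodal formulas. -/
inductive Fm : Type
  | var : ℕ → Fm
  | bot : Fm
  | top : Fm
  | neg : Fm → Fm
  | and : Fm → Fm → Fm
  | or : Fm → Fm → Fm
  | imp : Fm → Fm → Fm
  | box : Fm → Fm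

/-- Evaluation of the propositional structure of a formula under an assignment
`v` of truth values to formulas (only used on atoms, i.e. propositional
variables and boxed formulas). -/
def evalP (v : Fm → Prop) : Fm → Prop
  | .var n => v (.var n)
  | .bot => False
  | .top => True
  | .neg A => ¬ evalP v A
  | .and A B => evalP v A ∧ evalP v B
  | .or A B => evalP v A ∨ evalP v B
  | .imp A B => evalP v A → evalP v B
  | .box A => v (.box A)

/-- `A` is an instance of a classical propositional tautology. -/
def Taut (A : Fm) : Prop := ∀ v, evalP v A

/-- A component of a (linear nested) sequent: a two-sided multiset sequent. -/
abbrev Cmp := Multiset Fm × Multiset Fm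

/-- A set `𝒜 ⊆ {M, C, N}` of additional axioms for classical modal logic `E`. -/
structure EAx where
  m : Bool := false
  c : Bool := false
  n : Bool := false

/-- Hilbert-style theoremhood in the non-normal modal logic `E𝒜`: classical
propositional logic, the congruence rule, and the axioms among
`M : □(A∧B) → (□A ∧ □B)`, `C : (□A ∧ □B) → □(A∧B)` and `N : □⊤` in `𝒜`. -/
inductive EThm (Ax : EAx) : Fm → Prop
  | taut {A} : Taut A → EThm Ax A
  | mp {A B} : EThm Ax (.imp A B) → EThm Ax A → EThm Ax B
  | cong {A B} : EThm Ax (.imp A B) → EThm Ax (.imp B A) →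
      EThm Ax (.imp (.box A) (.box B))
  | axM {A B} : Ax.m = true →
      EThm Ax (.imp (.box (.and A B)) (.and (.box A) (.box B)))
  | axC {A B} : Ax.c = true →
      EThm Ax (.imp (.and (.box A) (.box B)) (.box (.and A B)))
  | axN : Ax.n = true → EThm Ax (.box .top)

/-- A linear nested sequent of type `LNS^e`: a (nonempty) list of components
joined by the nesting `⫽`, optionally terminated by a binary nesting
`⫽ᵉ(Σ ⇒ Π; Ω ⇒ Θ)`. -/
abbrev LNSe := List Cmp × Option (Cmp × Cmp)

/-- The linear nested sequent calculus `LNS_E𝒜` for non-normal modal logics,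
optionally extended with internal contraction (`con`) and weakening (`wk`):
classical propositional rules applied in any component (but not inside `⫽ᵉ`),
the modal rules `□_R^e` and `□_L^e`, and the rules `N`, `M`, `C` for the
corresponding axioms in `𝒜`. -/
inductive ED (Ax : EAx) (con wk : Bool) : LNSe → Prop
  | init {pre post : List Cmp} {ep} {Γ Δ : Multiset Fm} {m : ℕ} :
      ED Ax con wk (pre ++ (Fm.var m ::ₘ Γ, Fm.var m ::ₘ Δ) :: post, ep)
  | botL {pre post ep Γ Δ} :
      ED Ax con wk (pre ++ (Fm.bot ::ₘ Γ, Δ) :: post, ep)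
  | topR {pre post ep Γ Δ} :
      ED Ax con wk (pre ++ (Γ, Fm.top ::ₘ Δ) :: post, ep)
  | negL {pre post ep Γ Δ A} :
      ED Ax con wk (pre ++ (Γ, A ::ₘ Δ) :: post, ep) →
      ED Ax con wk (pre ++ (Fm.neg A ::ₘ Γ, Δ) :: post, ep)
  | negR {pre post ep Γ Δ A} :
      ED Ax con wk (pre ++ (A ::ₘ Γ, Δ) :: post, ep) →
      ED Ax con wk (pre ++ (Γ, Fm.neg A ::ₘ Δ) :: post, ep)
  | andL {pre post ep Γ Δ A B} :
      ED Ax con wk (pre ++ (A ::ₘ B ::ₘ Γ, Δ) :: post, ep) →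
      ED Ax con wk (pre ++ (Fm.and A B ::ₘ Γ, Δ) :: post, ep)
  | andR {pre post ep Γ Δ A B} :
      ED Ax con wk (pre ++ (Γ, A ::ₘ Δ) :: post, ep) →
      ED Ax con wk (pre ++ (Γ, B ::ₘ Δ) :: post, ep) →
      ED Ax con wk (pre ++ (Γ, Fm.and A B ::ₘ Δ) :: post, ep)
  | orL {pre post ep Γ Δ A B} :
      ED Ax con wk (pre ++ (A ::ₘ Γ, Δ) :: post, ep) →
      ED Ax con wk (pre ++ (B ::ₘ Γ, Δ) :: post, ep) →
      ED Ax con wk (pre ++ (Fm.or A B ::ₘ Γ, Δ) :: post, ep)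
  | orR {pre post ep Γ Δ A B} :
      ED Ax con wk (pre ++ (Γ, A ::ₘ B ::ₘ Δ) :: post, ep) →
      ED Ax con wk (pre ++ (Γ, Fm.or A B ::ₘ Δ) :: post, ep)
  | impL {pre post ep Γ Δ A B} :
      ED Ax con wk (pre ++ (B ::ₘ Γ, Δ) :: post, ep) →
      ED Ax con wk (pre ++ (Γ, A ::ₘ Δ) :: post, ep) →
      ED Ax con wk (pre ++ (Fm.imp A B ::ₘ Γ, Δ) :: post, ep)
  | impR {pre post ep Γ Δ A B} :
      ED Ax con wk (pre ++ (A ::ₘ Γ, B ::ₘ Δ) :: post, ep) →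
      ED Ax con wk (pre ++ (Γ, Fm.imp A B ::ₘ Δ) :: post, ep)
  | conL {pre post ep Γ Δ A} : con = true →
      ED Ax con wk (pre ++ (A ::ₘ A ::ₘ Γ, Δ) :: post, ep) →
      ED Ax con wk (pre ++ (A ::ₘ Γ, Δ) :: post, ep)
  | conR {pre post ep Γ Δ A} : con = true →
      ED Ax con wk (pre ++ (Γ, A ::ₘ A ::ₘ Δ) :: post, ep) →
      ED Ax con wk (pre ++ (Γ, A ::ₘ Δ) :: post, ep)
  | wkL {pre post ep Γ Δ A} : wk = true →
      ED Ax con wk (pre ++ (Γ, Δ) :: post, ep) →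
      ED Ax con wk (pre ++ (A ::ₘ Γ, Δ) :: post, ep)
  | wkR {pre post ep Γ Δ A} : wk = true →
      ED Ax con wk (pre ++ (Γ, Δ) :: post, ep) →
      ED Ax con wk (pre ++ (Γ, A ::ₘ Δ) :: post, ep)
  | boxRe {G Γ Δ B} :
      ED Ax con wk (G ++ [(Γ, Δ)], some ((0, {B}), ({B}, 0))) →
      ED Ax con wk (G ++ [(Γ, Fm.box B ::ₘ Δ)], none)
  | boxLe {G Γ Δ Sg Pp Om Th A} :
      ED Ax con wk (G ++ [(Γ, Δ), (A ::ₘ Sg, Pp)], none) →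
      ED Ax con wk (G ++ [(Γ, Δ), (Om, A ::ₘ Th)], none) →
      ED Ax con wk (G ++ [(Fm.box A ::ₘ Γ, Δ)], some ((Sg, Pp), (Om, Th)))
  | ruleN {G Γ Δ B} : Ax.n = true →
      ED Ax con wk (G ++ [(Γ, Δ), (0, {B})], none) →
      ED Ax con wk (G ++ [(Γ, Fm.box B ::ₘ Δ)], none)
  | ruleM {c G Sg Pp Om Th} : Ax.m = true →
      ED Ax con wk (c :: G, some ((Sg, Pp), (Fm.bot ::ₘ Om, Th))) →
      ED Ax con wk (c :: G, some ((Sg, Pp), (Om, Th)))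
  | ruleC {G Γ Δ Sg Pp Om Th A} : Ax.c = true →
      ED Ax con wk (G ++ [(Γ, Δ)], some ((A ::ₘ Sg, Pp), (Om, Th))) →
      ED Ax con wk (G ++ [(Γ, Δ), (Om, A ::ₘ Th)], none) →
      ED Ax con wk (G ++ [(Fm.box A ::ₘ Γ, Δ)], some ((Sg, Pp), (Om, Th)))

/-- Derivability of a sequent as last component, in every context. -/
def Dv (Ax : EAx) (Γ Δ : Multiset Fm) : Prop :=
  ∀ G : List Cmp, ED Ax true true (G ++ [(Γ, Δ)], none)

section helpers
variable {Ax : EAx}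

theorem Dv.wkLs {Γ Δ : Multiset Fm} (Γ' : Multiset Fm) (h : Dv Ax Γ Δ) : Dv Ax (Γ' + Γ) Δ := by
  induction Γ' using Multiset.induction with
  | empty => simpa using h
  | cons a s ih => intro G; rw [Multiset.cons_add]; exact ED.wkL rfl (ih G)

theorem Dv.wkRs {Γ Δ : Multiset Fm} (Δ' : Multiset Fm) (h : Dv Ax Γ Δ) : Dv Ax Γ (Δ' + Δ) := by
  induction Δ' using Multiset.induction with
  | empty => simpa using h
  | cons a s ih => intro G; rw [Multiset.cons_add]; exact ED.wkR rfl (ih G)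

theorem Dv.conLs {Γ' Δ : Multiset Fm} (Γ : Multiset Fm) (hs : Γ ⊆ Γ')
    (h : Dv Ax (Γ + Γ') Δ) : Dv Ax Γ' Δ := by
  induction Γ using Multiset.induction with
  | empty => simpa using h
  | cons a s ih =>
    obtain ⟨ha, hs⟩ := Multiset.cons_subset.1 hs
    apply ih hs
    obtain ⟨t, rfl⟩ := Multiset.exists_cons_of_mem ha
    intro G
    have := h G
    rw [Multiset.cons_add, Multiset.add_cons] at this
    rw [Multiset.add_cons]
    exact ED.conL rfl this

theorem Dv.conRs {Γ Δ' : Multiset Fm} (Δ : Multiset Fm) (hs : Δ ⊆ Δ')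
    (h : Dv Ax Γ (Δ + Δ')) : Dv Ax Γ Δ' := by
  induction Δ using Multiset.induction with
  | empty => simpa using h
  | cons a s ih =>
    obtain ⟨ha, hs⟩ := Multiset.cons_subset.1 hs
    apply ih hs
    obtain ⟨t, rfl⟩ := Multiset.exists_cons_of_mem ha
    intro G
    have := h G
    rw [Multiset.cons_add, Multiset.add_cons] at this
    rw [Multiset.add_cons]
    exact ED.conR rfl this

theorem Dv.sub {Γ Δ Γ' Δ' : Multiset Fm} (h : Dv Ax Γ Δ) (h1 : Γ ⊆ Γ') (h2 : Δ ⊆ Δ') :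
    Dv Ax Γ' Δ' := by
  have a := h.wkLs Γ'
  rw [add_comm] at a
  have b := (a.conLs Γ h1).wkRs Δ'
  rw [add_comm] at b
  exact b.conRs Δ h2

/-- Side condition on the number of principal boxed formulas. -/
def okc (Ax : EAx) (As : Multiset Fm) : Prop :=
  As.card = 1 ∨ (Ax.c = true ∧ 1 ≤ As.card) ∨ (Ax.n = true ∧ As.card = 0)

theorem boxs_aux {B : Fm} {Om : Multiset Fm} (G : List Cmp) (A : Fm) (As : Multiset Fm) :
    ∀ Sg : Multiset Fm, (∀ X ∈ A ::ₘ As, Dv Ax Om {X}) → (Ax.c = true ∨ As = 0) →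
      Dv Ax (A ::ₘ As + Sg) {B} →
      ED Ax true true (G ++ [(Multiset.map Fm.box (A ::ₘ As), 0)], some ((Sg, {B}), (Om, 0))) := by
  induction As using Multiset.induction with
  | empty =>
    intro Sg h1 _ h3
    rw [Multiset.map_cons]
    apply ED.boxLe
    · have := h3 (G ++ [(0, 0)])
      simpa using this
    · have := h1 A (by simp) (G ++ [(0, 0)])
      simpa using this
  | cons A' s ih =>
    intro Sg h1 h2 h3
    have hc : Ax.c = true := by simpa using h2
    rw [Multiset.cons_swap, Multiset.map_cons]
    apply ED.ruleC hc
    · apply ih (A' ::ₘ Sg) _ (Or.inl hc)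
      · rw [Multiset.add_cons, ← Multiset.cons_add, Multiset.cons_swap]
        exact h3
      · intro X hX
        apply h1
        simp at hX ⊢
        tauto
    · have := h1 A' (by simp) (G ++ [(Multiset.map Fm.box (A ::ₘ s), 0)])
      simpa using this

theorem boxs {B : Fm} {As : Multiset Fm} (h1 : Dv Ax As {B})
    (h2 : Ax.m = true ∨ ∀ A ∈ As, Dv Ax {B} {A}) (ok : okc Ax As) :
    Dv Ax (As.map Fm.box) {Fm.box B} := by
  intro G
  by_cases h0 : As = 0
  · subst h0
    have hn : Ax.n = true := by simpa [okc] using ok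
    have := h1 (G ++ [(0, 0)])
    exact ED.ruleN (Δ := 0) hn (by simpa using this)
  · obtain ⟨A, hA⟩ := Multiset.exists_mem_of_ne_zero h0
    obtain ⟨s, rfl⟩ := Multiset.exists_cons_of_mem hA
    have hc : Ax.c = true ∨ s = 0 := by
      rcases ok with h | h | h
      · right; simpa using h
      · exact Or.inl h.1
      · simp at h
    apply ED.boxRe (Δ := 0)
    rcases h2 with hm | h2
    · have key : ED Ax true true (G ++ [(Multiset.map Fm.box (A ::ₘ s), 0)],
          some ((0, {B}), (Fm.bot ::ₘ {B}, 0))) := by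
        apply boxs_aux G A s 0 _ hc
        · simpa using h1
        · intro X _ G'
          exact ED.botL
      cases G with
      | nil => exact ED.ruleM hm key
      | cons c G => exact ED.ruleM hm key
    · exact boxs_aux G A s 0 h2 hc (by simpa using h1)

/-- Inconsistency of a set of signed formulas. -/
def Inc (Ax : EAx) (X : Set (Bool × Fm)) : Prop :=
  ∃ Γ Δ : Multiset Fm, (∀ A ∈ Γ, (true, A) ∈ X) ∧ (∀ A ∈ Δ, (false, A) ∈ X) ∧ Dv Ax Γ Δ

theorem Inc.mono {X Y : Set (Bool × Fm)} (h : Inc Ax X) (hs : X ⊆ Y) : Inc Ax Y := by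
  obtain ⟨Γ, Δ, a, b, c⟩ := h
  exact ⟨Γ, Δ, fun A hA => hs (a A hA), fun A hA => hs (b A hA), c⟩

/-- Splitting off added formulas. -/
theorem Inc.split {X : Set (Bool × Fm)} (L R : Multiset Fm)
    (h : Inc Ax (X ∪ {p | (p.1 = true ∧ p.2 ∈ L) ∨ (p.1 = false ∧ p.2 ∈ R)})) :
    ∃ Γ Δ : Multiset Fm, (∀ A ∈ Γ, (true, A) ∈ X) ∧ (∀ A ∈ Δ, (false, A) ∈ X) ∧
      Dv Ax (L + Γ) (R + Δ) := by
  classical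
  obtain ⟨Γ, Δ, a, b, c⟩ := h
  refine ⟨Γ.filter (fun A => (true, A) ∈ X), Δ.filter (fun A => (false, A) ∈ X), ?_, ?_,
    c.sub ?_ ?_⟩
  · intro A hA; exact (Multiset.mem_filter.1 hA).2
  · intro A hA; exact (Multiset.mem_filter.1 hA).2
  · intro A hA
    have := a A hA
    simp at this
    simp [hA]; tauto
  · intro A hA
    have := b A hA
    simp at this
    simp [hA]; tauto

theorem fin_char (Ax : EAx) : Order.IsOfFiniteCharacter {X | ¬ Inc Ax X} := by
  classical
  intro X
  constructor
  · intro h Y hY _ hi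
    exact h (hi.mono hY)
  · intro h hi
    obtain ⟨Γ, Δ, a, b, c⟩ := hi
    refine h (y := ((Γ.toFinset.image (fun A => (true, A))) ∪
      (Δ.toFinset.image (fun A => (false, A))) : Finset (Bool × Fm))) ?_ (Finset.finite_toSet _) ?_
    · intro p hp
      simp at hp
      rcases hp with ⟨A, hA, rfl⟩ | ⟨A, hA, rfl⟩
      · exact a A hA
      · exact b A hA
    · exact ⟨Γ, Δ, by simp, by simp, c⟩

/-- Worlds: maximal consistent sets of signed formulas. -/
def World (Ax : EAx) : Type := {X : Set (Bool × Fm) // Maximal (fun X => ¬ Inc Ax X) X}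

theorem exists_world {X : Set (Bool × Fm)} (h : ¬ Inc Ax X) :
    ∃ w : World Ax, X ⊆ w.1 := by
  obtain ⟨m, h1, h2⟩ := (fin_char Ax).exists_maximal h
  exact ⟨⟨m, h2⟩, h1⟩

theorem exists_world' {L R : Multiset Fm} (h : ¬ Dv Ax L R) :
    ∃ w : World Ax, (∀ A ∈ L, (true, A) ∈ w.1) ∧ (∀ A ∈ R, (false, A) ∈ w.1) := by
  have : ¬ Inc Ax (∅ ∪ {p : Bool × Fm | (p.1 = true ∧ p.2 ∈ L) ∨ (p.1 = false ∧ p.2 ∈ R)}) := by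
    intro hi
    obtain ⟨Γ, Δ, a, b, c⟩ := hi.split
    apply h
    rw [Multiset.eq_zero_of_forall_notMem (s := Γ) (fun A hA => a A hA),
      Multiset.eq_zero_of_forall_notMem (s := Δ) (fun A hA => b A hA)] at c
    simpa using c
  obtain ⟨w, hw⟩ := exists_world this
  exact ⟨w, fun A hA => hw (by simp [hA]), fun A hA => hw (by simp [hA])⟩

theorem World.con (w : World Ax) {Γ Δ : Multiset Fm} (a : ∀ A ∈ Γ, (true, A) ∈ w.1)
    (b : ∀ A ∈ Δ, (false, A) ∈ w.1) : ¬ Dv Ax Γ Δ := fun c => w.2.1 ⟨Γ, Δ, a, b, c⟩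

/-- If no context of `w` refutes the added formulas, they belong to `w`. -/
theorem World.ext' (w : World Ax) (L R : Multiset Fm)
    (h : ∀ Γ Δ : Multiset Fm, (∀ A ∈ Γ, (true, A) ∈ w.1) → (∀ A ∈ Δ, (false, A) ∈ w.1) →
      ¬ Dv Ax (L + Γ) (R + Δ)) :
    (∀ A ∈ L, (true, A) ∈ w.1) ∧ (∀ A ∈ R, (false, A) ∈ w.1) := by
  have hc : ¬ Inc Ax (w.1 ∪
      {p : Bool × Fm | (p.1 = true ∧ p.2 ∈ L) ∨ (p.1 = false ∧ p.2 ∈ R)}) := by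
    intro hi
    obtain ⟨Γ, Δ, a, b, c⟩ := hi.split
    exact h Γ Δ a b c
  have hs := w.2.2 hc Set.subset_union_left
  exact ⟨fun A hA => hs (by simp [hA]), fun A hA => hs (by simp [hA])⟩

/-- One-branch rule. -/
theorem World.one (w : World Ax) (L R L' R' : Multiset Fm)
    (hL : ∀ A ∈ L, (true, A) ∈ w.1) (hR : ∀ A ∈ R, (false, A) ∈ w.1)
    (h : ∀ Γ Δ : Multiset Fm, Dv Ax (L' + Γ) (R' + Δ) → Dv Ax (L + Γ) (R + Δ)) :
    (∀ A ∈ L', (true, A) ∈ w.1) ∧ (∀ A ∈ R', (false, A) ∈ w.1) := by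
  apply w.ext'
  intro Γ Δ a b c
  refine w.con ?_ ?_ (h Γ Δ c)
  · intro A hA; rcases Multiset.mem_add.1 hA with h | h
    exacts [hL A h, a A h]
  · intro A hA; rcases Multiset.mem_add.1 hA with h | h
    exacts [hR A h, b A h]

/-- Two-branch rule. -/
theorem World.two (w : World Ax) (L R L' R' L'' R'' : Multiset Fm)
    (hL : ∀ A ∈ L, (true, A) ∈ w.1) (hR : ∀ A ∈ R, (false, A) ∈ w.1)
    (h : ∀ Γ Δ : Multiset Fm, Dv Ax (L' + Γ) (R' + Δ) → Dv Ax (L'' + Γ) (R'' + Δ) →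
      Dv Ax (L + Γ) (R + Δ)) :
    ((∀ A ∈ L', (true, A) ∈ w.1) ∧ (∀ A ∈ R', (false, A) ∈ w.1)) ∨
    ((∀ A ∈ L'', (true, A) ∈ w.1) ∧ (∀ A ∈ R'', (false, A) ∈ w.1)) := by
  rw [or_iff_not_imp_left]
  intro hn
  apply w.ext'
  intro Γ Δ a b c
  apply hn
  apply w.ext'
  intro Γ' Δ' a' b' c'
  refine w.con (Γ := L + (Γ + Γ')) (Δ := R + (Δ + Δ')) ?_ ?_
    (h (Γ + Γ') (Δ + Δ') (c'.sub ?_ ?_) (c.sub ?_ ?_))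
  · intro A hA
    rcases Multiset.mem_add.1 hA with h | h
    · exact hL A h
    rcases Multiset.mem_add.1 h with h | h
    exacts [a A h, a' A h]
  · intro A hA
    rcases Multiset.mem_add.1 hA with h | h
    · exact hR A h
    rcases Multiset.mem_add.1 h with h | h
    exacts [b A h, b' A h]
  all_goals
    intro A hA
    simp only [Multiset.mem_add] at hA ⊢
    tauto

/-- Forcing in the canonical bi-neighbourhood model. -/
def force (Ax : EAx) : Fm → World Ax → Prop
  | .var n, w => (true, Fm.var n) ∈ w.1
  | .bot, _ => False
  | .top, _ => True
  | .neg A, w => ¬ force Ax A w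
  | .and A B, w => force Ax A w ∧ force Ax B w
  | .or A B, w => force Ax A w ∨ force Ax B w
  | .imp A B, w => force Ax A w → force Ax B w
  | .box B, w => ∃ As : Multiset Fm, okc Ax As ∧ (∀ A ∈ As, (true, Fm.box A) ∈ w.1) ∧
      (∀ u : World Ax, (∀ A ∈ As, (true, A) ∈ u.1) → force Ax B u) ∧
      (∀ u : World Ax, force Ax B u → Ax.m = true ∨ ∀ A ∈ As, (false, A) ∉ u.1)

theorem truth (A : Fm) : ∀ w : World Ax,
    ((true, A) ∈ w.1 → force Ax A w) ∧ ((false, A) ∈ w.1 → ¬ force Ax A w) := by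
  induction A with
  | var n =>
    intro w
    refine ⟨id, fun h h' => w.con (Γ := {Fm.var n}) (Δ := {Fm.var n}) (by simpa [force] using h')
      (by simpa using h) (fun G => ED.init (Γ := 0) (Δ := 0))⟩
  | bot =>
    intro w
    refine ⟨fun h => w.con (Γ := {Fm.bot}) (Δ := 0) (by simpa using h)
      (by simp) (fun G => ED.botL (Γ := 0)), fun _ h => h⟩
  | top =>
    intro w
    refine ⟨fun _ => trivial, fun h => (w.con (Γ := 0) (Δ := {Fm.top}) (by simp)
      (by simpa using h) (fun G => ED.topR (Δ := 0))).elim⟩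
  | neg A ih =>
    intro w
    constructor
    · intro h
      have := w.one {Fm.neg A} 0 0 {A} (by simpa using h) (by simp)
        (fun Γ Δ d G => by simpa using ED.negL (by simpa using d G))
      exact (ih w).2 (by simpa using this)
    · intro h
      have := w.one 0 {Fm.neg A} {A} 0 (by simp) (by simpa using h)
        (fun Γ Δ d G => by simpa using ED.negR (by simpa using d G))
      exact not_not.2 ((ih w).1 (by simpa using this))
  | and A B ihA ihB =>
    intro w
    constructor
    · intro h
      have := w.one {Fm.and A B} 0 (A ::ₘ {B}) 0 (by simpa using h) (by simp)
        (fun Γ Δ d G => by simpa using ED.andL (by simpa using d G))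
      simp at this
      exact ⟨(ihA w).1 this.1, (ihB w).1 this.2⟩
    · intro h
      have := w.two 0 {Fm.and A B} 0 {A} 0 {B} (by simp) (by simpa using h)
        (fun Γ Δ d e G => by
          simpa using ED.andR (by simpa using d G) (by simpa using e G))
      simp at this
      rintro ⟨h1, h2⟩
      rcases this with h | h
      exacts [(ihA w).2 h h1, (ihB w).2 h h2]
  | or A B ihA ihB =>
    intro w
    constructor
    · intro h
      have := w.two {Fm.or A B} 0 {A} 0 {B} 0 (by simpa using h) (by simp)
        (fun Γ Δ d e G => by
          simpa using ED.orL (by simpa using d G) (by simpa using e G))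
      simp at this
      exact this.imp (ihA w).1 (ihB w).1
    · intro h
      have := w.one 0 {Fm.or A B} 0 (A ::ₘ {B}) (by simp) (by simpa using h)
        (fun Γ Δ d G => by simpa using ED.orR (by simpa using d G))
      simp at this
      rintro (h | h)
      exacts [(ihA w).2 this.1 h, (ihB w).2 this.2 h]
  | imp A B ihA ihB =>
    intro w
    constructor
    · intro h
      have := w.two {Fm.imp A B} 0 {B} 0 0 {A} (by simpa using h) (by simp)
        (fun Γ Δ d e G => by
          simpa using ED.impL (by simpa using d G) (by simpa using e G))
      simp at this
      intro hA
      rcases this with h | h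
      exacts [(ihB w).1 h, ((ihA w).2 h hA).elim]
    · intro h
      have := w.one 0 {Fm.imp A B} {A} {B} (by simp) (by simpa using h)
        (fun Γ Δ d G => by simpa using ED.impR (by simpa using d G))
      simp at this
      intro hi
      exact (ihB w).2 this.2 (hi ((ihA w).1 this.1))
  | box B ih =>
    intro w
    constructor
    · intro h
      refine ⟨{B}, Or.inl (by simp), by simpa using h, ?_, ?_⟩
      · intro u hu
        exact (ih u).1 (by simpa using hu)
      · intro u hu
        right
        intro A hA hf
        rw [Multiset.mem_singleton] at hA
        subst hA
        exact (ih u).2 hf hu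
    · rintro h ⟨As, ok, hb, h1, h2⟩
      refine w.con (Γ := As.map Fm.box) (Δ := {Fm.box B}) (by simpa using hb) (by simpa using h)
        (boxs ?_ ?_ ok)
      · by_contra hn
        obtain ⟨u, a, b⟩ := exists_world' hn
        exact (ih u).2 (b B (by simp)) (h1 u a)
      · by_cases hm : Ax.m = true
        · exact Or.inl hm
        right
        intro A hA
        by_contra hn
        obtain ⟨u, a, b⟩ := exists_world' hn
        rcases h2 u ((ih u).1 (a B (by simp))) with h | h
        · exact hm h
        · exact h A hA (b A (by simp))

theorem eval_force (w : World Ax) (A : Fm) : evalP (fun B => force Ax B w) A ↔ force Ax A w := by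
  induction A with
  | var n => exact Iff.rfl
  | bot => exact Iff.rfl
  | top => exact Iff.rfl
  | neg A ih => exact not_congr ih
  | and A B h1 h2 => exact and_congr h1 h2
  | or A B h1 h2 => exact or_congr h1 h2
  | imp A B h1 h2 => exact imp_congr h1 h2
  | box A _ => exact Iff.rfl

theorem sound {A : Fm} (h : EThm Ax A) : ∀ w : World Ax, force Ax A w := by
  induction h with
  | taut h => exact fun w => (eval_force w _).1 (h _)
  | mp _ _ h1 h2 => exact fun w => h1 w (h2 w)
  | cong _ _ h1 h2 =>
    rintro w ⟨As, ok, hb, a, b⟩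
    exact ⟨As, ok, hb, fun u hu => h1 u (a u hu), fun u hu => b u (h2 u hu)⟩
  | axM hm =>
    rintro w ⟨As, ok, hb, a, b⟩
    exact ⟨⟨As, ok, hb, fun u hu => (a u hu).1, fun u hu => Or.inl hm⟩,
      ⟨As, ok, hb, fun u hu => (a u hu).2, fun u hu => Or.inl hm⟩⟩
  | axC hc =>
    rintro w ⟨⟨As, ok, hb, a, b⟩, ⟨As', ok', hb', a', b'⟩⟩
    refine ⟨As + As', ?_, ?_, ?_, ?_⟩
    · simp only [okc, Multiset.card_add, hc, true_and] at ok ok' ⊢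
      by_cases hn : Ax.n = true
      · simp only [hn, true_and] at ok ok' ⊢; omega
      · simp only [hn, Bool.false_eq_true, false_and, or_false] at ok ok' ⊢; omega
    · intro A hA
      exact (Multiset.mem_add.1 hA).elim (hb A) (hb' A)
    · intro u hu
      exact ⟨a u fun A hA => hu A (Multiset.mem_add.2 (Or.inl hA)),
        a' u fun A hA => hu A (Multiset.mem_add.2 (Or.inr hA))⟩
    · rintro u ⟨hu, hu'⟩
      rcases b u hu with h | h
      · exact Or.inl h
      rcases b' u hu' with h' | h'
      · exact Or.inl h'
      exact Or.inr fun A hA => (Multiset.mem_add.1 hA).elim (h A) (h' A)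
  | axN hn =>
    intro w
    exact ⟨0, Or.inr (Or.inr ⟨hn, rfl⟩), by simp, fun _ _ => trivial, fun _ _ => Or.inr (by simp)⟩

end helpers

/-- Completeness of the linear nested sequent calculus `LNS_E𝒜ConW` for the
non-normal modal logic `E𝒜` (`𝒜 ⊆ {M, C, N}`): if `A ∈ E𝒜` then the linear
nested sequent `⇒ A` is derivable in `LNS_E𝒜ConW`. -/
theorem LNSe_complete (Ax : EAx) (A : Fm) (h : EThm Ax A) :
    ED Ax true true ([(0, {A})], none) := by
  by_contra hn
  have : ¬ Dv Ax 0 {A} := fun d => hn (d [])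
  obtain ⟨w, -, hw⟩ := exists_world' this
  exact (truth A w).2 (hw A (by simp)) (sound h w)
end

section
/- For every 𝒜 ⊆ {M, C, N}, the weakening rules are depth-preserving admissible in LNS_E𝒜 and in LNS_E𝒜Con: if there is a derivation D of S{Γ ⇒ Δ} of depth at most n, then there are derivations D₁ of S{Γ, A ⇒ Δ} and D₂ of S{Γ ⇒ A, Δ} of depth at most n in the same system; moreover, if the level of the active components of every rule application in D is at least k, then the same holds for D₁ and D₂. -/
/-- Derivability in the calculus `LNS_E𝒜` (with internal contraction if
`con = true`), indexed by resources: `EDn Ax con d k G` holds iff there is a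
derivation of `G` of depth at most `d` in which the level of the active
components of every rule application is at least `k`.  (The level of the
`i`-th component of a linear nested sequent is `i`, counting from `1`.) -/
inductive EDn (Ax : EAx) (con : Bool) : ℕ → ℕ → LNSe → Prop
  | mono {d d' k k' G} : EDn Ax con d k G → d ≤ d' → k' ≤ k → EDn Ax con d' k' G
  | init {pre post : List Cmp} {ep} {Γ Δ : Multiset Fm} {m d k : ℕ} :
      k ≤ pre.length + 1 →
      EDn Ax con (d + 1) k (pre ++ (Fm.var m ::ₘ Γ, Fm.var m ::ₘ Δ) :: post, ep)
  | botL {pre post ep Γ Δ} {d k : ℕ} : k ≤ pre.length + 1 →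
      EDn Ax con (d + 1) k (pre ++ (Fm.bot ::ₘ Γ, Δ) :: post, ep)
  | topR {pre post ep Γ Δ} {d k : ℕ} : k ≤ pre.length + 1 →
      EDn Ax con (d + 1) k (pre ++ (Γ, Fm.top ::ₘ Δ) :: post, ep)
  | negL {pre post ep Γ Δ A} {d k : ℕ} : k ≤ pre.length + 1 →
      EDn Ax con d k (pre ++ (Γ, A ::ₘ Δ) :: post, ep) →
      EDn Ax con (d + 1) k (pre ++ (Fm.neg A ::ₘ Γ, Δ) :: post, ep)
  | negR {pre post ep Γ Δ A} {d k : ℕ} : k ≤ pre.length + 1 →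
      EDn Ax con d k (pre ++ (A ::ₘ Γ, Δ) :: post, ep) →
      EDn Ax con (d + 1) k (pre ++ (Γ, Fm.neg A ::ₘ Δ) :: post, ep)
  | andL {pre post ep Γ Δ A B} {d k : ℕ} : k ≤ pre.length + 1 →
      EDn Ax con d k (pre ++ (A ::ₘ B ::ₘ Γ, Δ) :: post, ep) →
      EDn Ax con (d + 1) k (pre ++ (Fm.and A B ::ₘ Γ, Δ) :: post, ep)
  | andR {pre post ep Γ Δ A B} {d k : ℕ} : k ≤ pre.length + 1 →
      EDn Ax con d k (pre ++ (Γ, A ::ₘ Δ) :: post, ep) →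
      EDn Ax con d k (pre ++ (Γ, B ::ₘ Δ) :: post, ep) →
      EDn Ax con (d + 1) k (pre ++ (Γ, Fm.and A B ::ₘ Δ) :: post, ep)
  | orL {pre post ep Γ Δ A B} {d k : ℕ} : k ≤ pre.length + 1 →
      EDn Ax con d k (pre ++ (A ::ₘ Γ, Δ) :: post, ep) →
      EDn Ax con d k (pre ++ (B ::ₘ Γ, Δ) :: post, ep) →
      EDn Ax con (d + 1) k (pre ++ (Fm.or A B ::ₘ Γ, Δ) :: post, ep)
  | orR {pre post ep Γ Δ A B} {d k : ℕ} : k ≤ pre.length + 1 →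
      EDn Ax con d k (pre ++ (Γ, A ::ₘ B ::ₘ Δ) :: post, ep) →
      EDn Ax con (d + 1) k (pre ++ (Γ, Fm.or A B ::ₘ Δ) :: post, ep)
  | impL {pre post ep Γ Δ A B} {d k : ℕ} : k ≤ pre.length + 1 →
      EDn Ax con d k (pre ++ (B ::ₘ Γ, Δ) :: post, ep) →
      EDn Ax con d k (pre ++ (Γ, A ::ₘ Δ) :: post, ep) →
      EDn Ax con (d + 1) k (pre ++ (Fm.imp A B ::ₘ Γ, Δ) :: post, ep)
  | impR {pre post ep Γ Δ A B} {d k : ℕ} : k ≤ pre.length + 1 →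
      EDn Ax con d k (pre ++ (A ::ₘ Γ, B ::ₘ Δ) :: post, ep) →
      EDn Ax con (d + 1) k (pre ++ (Γ, Fm.imp A B ::ₘ Δ) :: post, ep)
  | conL {pre post ep Γ Δ A} {d k : ℕ} : con = true → k ≤ pre.length + 1 →
      EDn Ax con d k (pre ++ (A ::ₘ A ::ₘ Γ, Δ) :: post, ep) →
      EDn Ax con (d + 1) k (pre ++ (A ::ₘ Γ, Δ) :: post, ep)
  | conR {pre post ep Γ Δ A} {d k : ℕ} : con = true → k ≤ pre.length + 1 →
      EDn Ax con d k (pre ++ (Γ, A ::ₘ A ::ₘ Δ) :: post, ep) →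
      EDn Ax con (d + 1) k (pre ++ (Γ, A ::ₘ Δ) :: post, ep)
  | boxRe {G Γ Δ B} {d k : ℕ} : k ≤ G.length + 1 →
      EDn Ax con d k (G ++ [(Γ, Δ)], some ((0, {B}), ({B}, 0))) →
      EDn Ax con (d + 1) k (G ++ [(Γ, Fm.box B ::ₘ Δ)], none)
  | boxLe {G Γ Δ Sg Pp Om Th A} {d k : ℕ} : k ≤ G.length + 1 →
      EDn Ax con d k (G ++ [(Γ, Δ), (A ::ₘ Sg, Pp)], none) →
      EDn Ax con d k (G ++ [(Γ, Δ), (Om, A ::ₘ Th)], none) →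
      EDn Ax con (d + 1) k (G ++ [(Fm.box A ::ₘ Γ, Δ)], some ((Sg, Pp), (Om, Th)))
  | ruleN {G Γ Δ B} {d k : ℕ} : Ax.n = true → k ≤ G.length + 1 →
      EDn Ax con d k (G ++ [(Γ, Δ), (0, {B})], none) →
      EDn Ax con (d + 1) k (G ++ [(Γ, Fm.box B ::ₘ Δ)], none)
  | ruleM {c G Sg Pp Om Th} {d k : ℕ} : Ax.m = true → k ≤ G.length + 2 →
      EDn Ax con d k (c :: G, some ((Sg, Pp), (Fm.bot ::ₘ Om, Th))) →
      EDn Ax con (d + 1) k (c :: G, some ((Sg, Pp), (Om, Th)))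
  | ruleC {G Γ Δ Sg Pp Om Th A} {d k : ℕ} : Ax.c = true → k ≤ G.length + 1 →
      EDn Ax con d k (G ++ [(Γ, Δ)], some ((A ::ₘ Sg, Pp), (Om, Th))) →
      EDn Ax con d k (G ++ [(Γ, Δ), (Om, A ::ₘ Th)], none) →
      EDn Ax con (d + 1) k (G ++ [(Fm.box A ::ₘ Γ, Δ)], some ((Sg, Pp), (Om, Th)))

theorem wk_inv {pre post L : List Cmp} {Γ Δ : Multiset Fm}
    (h : List.Forall₂ (· ≤ ·) (pre ++ (Γ, Δ) :: post) L) :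
    ∃ p X Y q, L = p ++ (Γ + X, Δ + Y) :: q ∧ pre.length = p.length ∧
      ∀ Γ1 Δ1, List.Forall₂ (· ≤ ·) (pre ++ (Γ1, Δ1) :: post)
        (p ++ (Γ1 + X, Δ1 + Y) :: q) := by
  induction pre generalizing L with
  | nil =>
    cases h with
    | @cons _ c _ q hc hq =>
      obtain ⟨c1, c2⟩ := c
      obtain ⟨h1, h2⟩ := hc
      obtain ⟨X, rfl⟩ := Multiset.le_iff_exists_add.1 h1
      obtain ⟨Y, rfl⟩ := Multiset.le_iff_exists_add.1 h2
      exact ⟨[], X, Y, q, rfl, rfl, fun _ _ =>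
        .cons ⟨Multiset.le_add_right _ _, Multiset.le_add_right _ _⟩ hq⟩
  | cons a pre ih =>
    cases h with
    | cons hc hq =>
      obtain ⟨p, X, Y, q, rfl, hl, H⟩ := ih hq
      exact ⟨_ :: p, X, Y, q, rfl, by simp [hl], fun _ _ => .cons hc (H _ _)⟩

theorem wk_inv_last {pre L : List Cmp} {Γ Δ : Multiset Fm}
    (h : List.Forall₂ (· ≤ ·) (pre ++ [(Γ, Δ)]) L) :
    ∃ p X Y, L = p ++ [(Γ + X, Δ + Y)] ∧ pre.length = p.length ∧
      ∀ Γ1 Δ1 t, List.Forall₂ (· ≤ ·) (pre ++ (Γ1, Δ1) :: t)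
        (p ++ (Γ1 + X, Δ1 + Y) :: t) := by
  obtain ⟨p, X, Y, q, rfl, hl, H⟩ := wk_inv h
  have := h.length_eq
  have hq : q = [] := by
    apply List.eq_nil_of_length_eq_zero
    simp at this
    omega
  subst hq
  refine ⟨p, X, Y, rfl, hl, fun Γ1 Δ1 t => ?_⟩
  have h2 := List.rel_append (R := fun a b : Cmp => a ≤ b) (H Γ1 Δ1)
    (List.forall₂_same.2 (fun (x : Cmp) (_ : x ∈ t) => le_refl x))
  simpa using h2

theorem wk_gen {Ax : EAx} {con : Bool} {d k : ℕ} {G : LNSe} (h : EDn Ax con d k G) :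
    ∀ L, List.Forall₂ (· ≤ ·) G.1 L → EDn Ax con d k (L, G.2) := by
  induction h with
  | mono _ h1 h2 ih => exact fun L hL => .mono (ih L hL) h1 h2
  | init hk =>
    intro L hL
    obtain ⟨p, X, Y, q, rfl, hl, H⟩ := wk_inv hL
    simp only [Multiset.cons_add]
    exact .init (hl ▸ hk)
  | botL hk =>
    intro L hL
    obtain ⟨p, X, Y, q, rfl, hl, H⟩ := wk_inv hL
    simp only [Multiset.cons_add]
    exact .botL (hl ▸ hk)
  | topR hk =>
    intro L hL
    obtain ⟨p, X, Y, q, rfl, hl, H⟩ := wk_inv hL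
    simp only [Multiset.cons_add]
    exact .topR (hl ▸ hk)
  | negL hk _ ih =>
    intro L hL
    obtain ⟨p, X, Y, q, rfl, hl, H⟩ := wk_inv hL
    simp only [Multiset.cons_add]
    exact .negL (hl ▸ hk) (by simpa only [Multiset.cons_add] using ih _ (H _ _))
  | negR hk _ ih =>
    intro L hL
    obtain ⟨p, X, Y, q, rfl, hl, H⟩ := wk_inv hL
    simp only [Multiset.cons_add]
    exact .negR (hl ▸ hk) (by simpa only [Multiset.cons_add] using ih _ (H _ _))
  | andL hk _ ih =>
    intro L hL
    obtain ⟨p, X, Y, q, rfl, hl, H⟩ := wk_inv hL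
    simp only [Multiset.cons_add]
    exact .andL (hl ▸ hk) (by simpa only [Multiset.cons_add] using ih _ (H _ _))
  | orR hk _ ih =>
    intro L hL
    obtain ⟨p, X, Y, q, rfl, hl, H⟩ := wk_inv hL
    simp only [Multiset.cons_add]
    exact .orR (hl ▸ hk) (by simpa only [Multiset.cons_add] using ih _ (H _ _))
  | impR hk _ ih =>
    intro L hL
    obtain ⟨p, X, Y, q, rfl, hl, H⟩ := wk_inv hL
    simp only [Multiset.cons_add]
    exact .impR (hl ▸ hk) (by simpa only [Multiset.cons_add] using ih _ (H _ _))
  | conL hc hk _ ih =>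
    intro L hL
    obtain ⟨p, X, Y, q, rfl, hl, H⟩ := wk_inv hL
    simp only [Multiset.cons_add]
    exact .conL hc (hl ▸ hk) (by simpa only [Multiset.cons_add] using ih _ (H _ _))
  | conR hc hk _ ih =>
    intro L hL
    obtain ⟨p, X, Y, q, rfl, hl, H⟩ := wk_inv hL
    simp only [Multiset.cons_add]
    exact .conR hc (hl ▸ hk) (by simpa only [Multiset.cons_add] using ih _ (H _ _))
  | andR hk _ _ ih1 ih2 =>
    intro L hL
    obtain ⟨p, X, Y, q, rfl, hl, H⟩ := wk_inv hL
    simp only [Multiset.cons_add]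
    exact .andR (hl ▸ hk) (by simpa only [Multiset.cons_add] using ih1 _ (H _ _))
      (by simpa only [Multiset.cons_add] using ih2 _ (H _ _))
  | orL hk _ _ ih1 ih2 =>
    intro L hL
    obtain ⟨p, X, Y, q, rfl, hl, H⟩ := wk_inv hL
    simp only [Multiset.cons_add]
    exact .orL (hl ▸ hk) (by simpa only [Multiset.cons_add] using ih1 _ (H _ _))
      (by simpa only [Multiset.cons_add] using ih2 _ (H _ _))
  | impL hk _ _ ih1 ih2 =>
    intro L hL
    obtain ⟨p, X, Y, q, rfl, hl, H⟩ := wk_inv hL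
    simp only [Multiset.cons_add]
    exact .impL (hl ▸ hk) (by simpa only [Multiset.cons_add] using ih1 _ (H _ _))
      (by simpa only [Multiset.cons_add] using ih2 _ (H _ _))
  | boxRe hk _ ih =>
    intro L hL
    obtain ⟨p, X, Y, rfl, hl, H⟩ := wk_inv_last hL
    simp only [Multiset.cons_add]
    exact .boxRe (hl ▸ hk) (by simpa only [Multiset.cons_add] using ih _ (H _ _ _))
  | ruleN hc hk _ ih =>
    intro L hL
    obtain ⟨p, X, Y, rfl, hl, H⟩ := wk_inv_last hL
    simp only [Multiset.cons_add]
    exact .ruleN hc (hl ▸ hk) (by simpa only [Multiset.cons_add] using ih _ (H _ _ _))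
  | boxLe hk _ _ ih1 ih2 =>
    intro L hL
    obtain ⟨p, X, Y, rfl, hl, H⟩ := wk_inv_last hL
    simp only [Multiset.cons_add]
    exact .boxLe (hl ▸ hk) (by simpa only [Multiset.cons_add] using ih1 _ (H _ _ _))
      (by simpa only [Multiset.cons_add] using ih2 _ (H _ _ _))
  | ruleC hc hk _ _ ih1 ih2 =>
    intro L hL
    obtain ⟨p, X, Y, rfl, hl, H⟩ := wk_inv_last hL
    simp only [Multiset.cons_add]
    exact .ruleC hc (hl ▸ hk) (by simpa only [Multiset.cons_add] using ih1 _ (H _ _ _))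
      (by simpa only [Multiset.cons_add] using ih2 _ (H _ _ _))
  | ruleM hc hk _ ih =>
    intro L hL
    have hlen := hL.length_eq
    cases L with
    | nil => simp at hlen
    | cons c' L =>
      simp at hlen
      exact .ruleM hc (hlen ▸ hk) (ih _ hL)

/-- Depth-preserving admissibility of weakening in `LNS_E𝒜` and `LNS_E𝒜Con`
(for every `𝒜 ⊆ {M, C, N}`): if there is a derivation of `S{Γ ⇒ Δ}` of depth
at most `d` in which the level of the active components of every rule
application is at least `k`, then there are such derivations of
`S{Γ, A ⇒ Δ}` and of `S{Γ ⇒ A, Δ}` in the same system. -/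
theorem weakening_admissible (Ax : EAx) (con : Bool) (d k : ℕ)
    (pre post : List Cmp) (ep : Option (Cmp × Cmp)) (Γ Δ : Multiset Fm) (A : Fm)
    (h : EDn Ax con d k (pre ++ (Γ, Δ) :: post, ep)) :
    EDn Ax con d k (pre ++ (A ::ₘ Γ, Δ) :: post, ep) ∧
    EDn Ax con d k (pre ++ (Γ, A ::ₘ Δ) :: post, ep) := by
  refine ⟨wk_gen h _ ?_, wk_gen h _ ?_⟩
  all_goals
    refine List.rel_append (R := fun a b : Cmp => a ≤ b)
      (List.forall₂_same.2 (fun x _ => le_refl x))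
      (.cons ?_ (List.forall₂_same.2 (fun x _ => le_refl x)))
  · exact ⟨Multiset.le_cons_self _ _, le_refl _⟩
  · exact ⟨le_refl _, Multiset.le_cons_self _ _⟩
end

section
/- Let 𝒜 ⊆ {M, C, N} and write ⊢ for derivability in LNS_E𝒜Con. The non-end-active versions of the propositional rules are m-invertible: for every n ≥ 1, (1) if ⊢ S{Γ, (¬A)ⁿ ⇒ Δ} then ⊢ S{Γ ⇒ A^{n+k}, Δ} for some k ≥ 0; (2) if ⊢ S{Γ ⇒ (¬A)ⁿ, Δ} then ⊢ S{Γ, A^{n+k} ⇒ Δ} for some k ≥ 0; (3) if ⊢ S{Γ, (A→B)ⁿ ⇒ Δ} then ⊢ S{Γ, B^{n+k} ⇒ Δ} and ⊢ S{Γ ⇒ A^{n+ℓ}, Δ} for some k, ℓ ≥ 0; (4) if ⊢ S{Γ ⇒ (A→B)ⁿ, Δ} then ⊢ S{Γ, A^{n+k} ⇒ B^{n+ℓ}, Δ} for some k, ℓ ≥ 0; (5) if ⊢ S{Γ, (A∨B)ⁿ ⇒ Δ} then ⊢ S{Γ, A^{n+k} ⇒ Δ} and ⊢ S{Γ, B^{n+ℓ}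 ⇒ Δ} for some k, ℓ ≥ 0; (6) if ⊢ S{Γ ⇒ (A∨B)ⁿ, Δ} then ⊢ S{Γ ⇒ A^{n+k}, B^{n+ℓ}, Δ} for some k, ℓ ≥ 0; (7) if ⊢ S{Γ, (A∧B)ⁿ ⇒ Δ} then ⊢ S{Γ, A^{n+k}, B^{n+ℓ} ⇒ Δ} for some k, ℓ ≥ 0; (8) if ⊢ S{Γ ⇒ (A∧B)ⁿ, Δ} then ⊢ S{Γ ⇒ A^{n+k}, Δ} and ⊢ S{Γ ⇒ B^{n+ℓ}, Δ} for some k, ℓ ≥ 0. Moreover, in each case both the depth of the derivation and the minimal level of the active components of rule applications are preserved. -/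
/-- `n` copies of the formula `A`. -/
def rep (n : ℕ) (A : Fm) : Multiset Fm := Multiset.replicate n A

/-- Propositional rules: principal part and premise parts. -/
inductive PRule : Cmp → List Cmp → Prop
  | init (m) : PRule ({Fm.var m}, {Fm.var m}) []
  | botL : PRule ({Fm.bot}, 0) []
  | topR : PRule (0, {Fm.top}) []
  | negL (A) : PRule ({Fm.neg A}, 0) [(0, {A})]
  | negR (A) : PRule (0, {Fm.neg A}) [({A}, 0)]
  | andL (A B) : PRule ({Fm.and A B}, 0) [({A, B}, 0)]
  | andR (A B) : PRule (0, {Fm.and A B}) [(0, {A}), (0, {B})]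
  | orL (A B) : PRule ({Fm.or A B}, 0) [({A}, 0), ({B}, 0)]
  | orR (A B) : PRule (0, {Fm.or A B}) [(0, {A, B})]
  | impL (A B) : PRule ({Fm.imp A B}, 0) [({B}, 0), (0, {A})]
  | impR (A B) : PRule (0, {Fm.imp A B}) [({A}, {B})]
  | conL (A) : PRule ({A}, 0) [({A, A}, 0)]
  | conR (A) : PRule (0, {A}) [(0, {A, A})]

/-- Modal rules: principal part, binary nesting, level offset, premises. -/
inductive MRule (Ax : EAx) :
    Cmp → Option (Cmp × Cmp) → ℕ → List (List Cmp × Option (Cmp × Cmp)) → Prop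
  | boxRe (B) : MRule Ax (0, {Fm.box B}) none 1 [([], some ((0, {B}), ({B}, 0)))]
  | boxLe (A Sg Pp Om Th) : MRule Ax ({Fm.box A}, 0) (some ((Sg, Pp), (Om, Th))) 1
      [([(A ::ₘ Sg, Pp)], none), ([(Om, A ::ₘ Th)], none)]
  | ruleN (B) : Ax.n = true → MRule Ax (0, {Fm.box B}) none 1 [([(0, {B})], none)]
  | ruleM (Sg Pp Om Th) : Ax.m = true → MRule Ax 0 (some ((Sg, Pp), (Om, Th))) 2
      [([], some ((Sg, Pp), (Fm.bot ::ₘ Om, Th)))]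
  | ruleC (A Sg Pp Om Th) : Ax.c = true →
      MRule Ax ({Fm.box A}, 0) (some ((Sg, Pp), (Om, Th))) 1
      [([], some ((A ::ₘ Sg, Pp), (Om, Th))), ([(Om, A ::ₘ Th)], none)]

inductive ED2 (Ax : EAx) : ℕ → ℕ → LNSe → Prop
  | mono {d d' k k' G} : ED2 Ax d k G → d ≤ d' → k' ≤ k → ED2 Ax d' k' G
  | prop {pre post : List Cmp} {ep} {p c : Cmp} {qs} {d k : ℕ} : PRule p qs →
      k ≤ pre.length + 1 →
      (∀ q ∈ qs, ED2 Ax d k (pre ++ (q + c) :: post, ep)) →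
      ED2 Ax (d + 1) k (pre ++ (p + c) :: post, ep)
  | modal {pre : List Cmp} {ep} {p c : Cmp} {o qs} {d k : ℕ} : MRule Ax p ep o qs →
      k ≤ pre.length + o →
      (∀ q ∈ qs, ED2 Ax d k (pre ++ c :: q.1, q.2)) →
      ED2 Ax (d + 1) k (pre ++ [p + c], ep)

theorem ED2.of {Ax : EAx} {d k : ℕ} {G : LNSe} (h : EDn Ax true d k G) : ED2 Ax d k G := by
  induction h with
  | mono _ h1 h2 ih => exact ih.mono h1 h2
  | @init pre post ep Γ Δ m d k h =>
    simpa using ED2.prop (Ax := Ax) (d := d) (post := post) (ep := ep) (c := (Γ, Δ)) (.init m) h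
  | @botL pre post ep Γ Δ d k h =>
    simpa using ED2.prop (Ax := Ax) (d := d) (post := post) (ep := ep) (c := (Γ, Δ)) .botL h
  | @topR pre post ep Γ Δ d k h =>
    simpa using ED2.prop (Ax := Ax) (d := d) (post := post) (ep := ep) (c := (Γ, Δ)) .topR h
  | @negL pre post ep Γ Δ A d k h _ ih =>
    simpa [ih] using ED2.prop (Ax := Ax) (d := d) (post := post) (ep := ep) (c := (Γ, Δ)) (.negL A) h
  | @negR pre post ep Γ Δ A d k h _ ih =>
    simpa [ih] using ED2.prop (Ax := Ax) (d := d) (post := post) (ep := ep) (c := (Γ, Δ)) (.negR A) h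
  | @andL pre post ep Γ Δ A B d k h _ ih =>
    simpa [ih] using ED2.prop (Ax := Ax) (d := d) (post := post) (ep := ep) (c := (Γ, Δ)) (.andL A B) h
  | @andR pre post ep Γ Δ A B d k h _ _ ih ih' =>
    simpa [ih, ih'] using ED2.prop (Ax := Ax) (d := d) (post := post) (ep := ep) (c := (Γ, Δ)) (.andR A B) h
  | @orL pre post ep Γ Δ A B d k h _ _ ih ih' =>
    simpa [ih, ih'] using ED2.prop (Ax := Ax) (d := d) (post := post) (ep := ep) (c := (Γ, Δ)) (.orL A B) h
  | @orR pre post ep Γ Δ A B d k h _ ih =>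
    simpa [ih] using ED2.prop (Ax := Ax) (d := d) (post := post) (ep := ep) (c := (Γ, Δ)) (.orR A B) h
  | @impL pre post ep Γ Δ A B d k h _ _ ih ih' =>
    simpa [ih, ih'] using ED2.prop (Ax := Ax) (d := d) (post := post) (ep := ep) (c := (Γ, Δ)) (.impL A B) h
  | @impR pre post ep Γ Δ A B d k h _ ih =>
    simpa [ih] using ED2.prop (Ax := Ax) (d := d) (post := post) (ep := ep) (c := (Γ, Δ)) (.impR A B) h
  | @conL pre post ep Γ Δ A d k _ h _ ih =>
    simpa [ih] using ED2.prop (Ax := Ax) (d := d) (post := post) (ep := ep) (c := (Γ, Δ)) (.conL A) h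
  | @conR pre post ep Γ Δ A d k _ h _ ih =>
    simpa [ih] using ED2.prop (Ax := Ax) (d := d) (post := post) (ep := ep) (c := (Γ, Δ)) (.conR A) h
  | @boxRe G Γ Δ B d k h _ ih =>
    simpa [ih] using ED2.modal (Ax := Ax) (d := d) (c := (Γ, Δ)) (.boxRe B) h
  | @boxLe G Γ Δ Sg Pp Om Th A d k h _ _ ih ih' =>
    simpa [ih, ih'] using ED2.modal (Ax := Ax) (d := d) (c := (Γ, Δ)) (.boxLe A Sg Pp Om Th) h
  | @ruleN G Γ Δ B d k hn h _ ih =>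
    simpa [ih] using ED2.modal (Ax := Ax) (d := d) (c := (Γ, Δ)) (.ruleN B hn) h
  | @ruleM c G Sg Pp Om Th d k hn h _ ih =>
    obtain h0 | ⟨G', x, hx⟩ := List.eq_nil_or_concat (c :: G)
    · simp at h0
    · have hl : G.length = G'.length := by simpa using congrArg List.length hx
      rw [hx] at ih ⊢
      rw [hl] at h
      have := ED2.modal (Ax := Ax) (d := d) (c := x) (.ruleM Sg Pp Om Th hn) h
      simp at ih
      simpa [ih] using this
  | @ruleC G Γ Δ Sg Pp Om Th A d k hn h _ _ ih ih' =>
    simpa [ih, ih'] using ED2.modal (Ax := Ax) (d := d) (c := (Γ, Δ)) (.ruleC A Sg Pp Om Th hn) h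

theorem ED2.to {Ax : EAx} {d k : ℕ} {G : LNSe} (h : ED2 Ax d k G) : EDn Ax true d k G := by
  induction h with
  | mono _ h1 h2 ih => exact ih.mono h1 h2
  | @prop pre post ep p c qs d k hr hk _ ih =>
    obtain ⟨Γ, Δ⟩ := c
    cases hr <;> simp at ih ⊢
    · exact .init hk
    · exact .botL hk
    · exact .topR hk
    · exact .negL hk ih
    · exact .negR hk ih
    · exact .andL hk ih
    · exact .andR hk ih.1 ih.2
    · exact .orL hk ih.1 ih.2
    · exact .orR hk ih
    · exact .impL hk ih.1 ih.2
    · exact .impR hk ih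
    · exact .conL rfl hk ih
    · exact .conR rfl hk ih
  | @modal pre ep p c o qs d k hr hk _ ih =>
    obtain ⟨Γ, Δ⟩ := c
    cases hr <;> simp at ih ⊢
    · exact .boxRe hk ih
    · exact .boxLe hk ih.1 ih.2
    · exact .ruleN (by assumption) hk ih
    · cases pre with
      | nil => exact .ruleM (by assumption) (by simpa using hk) ih
      | cons a l => exact .ruleM (by assumption) (by simp at hk ⊢; omega) ih
    · exact .ruleC (by assumption) hk ih.1 ih.2

theorem split_eq {α : Type} {a b a' b' : List α} {x y : α} (h : a ++ x :: b = a' ++ y :: b') :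
    (a = a' ∧ x = y ∧ b = b') ∨ (∃ l, a' = a ++ x :: l ∧ b = l ++ y :: b') ∨
      (∃ l, a = a' ++ y :: l ∧ b' = l ++ x :: b) := by
  induction a generalizing a' with
  | nil =>
    cases a' with
    | nil => simp at h; simp [h]
    | cons u v => simp at h; right; left; exact ⟨v, by simp [h], h.2⟩
  | cons s t ih =>
    cases a' with
    | nil => simp at h; right; right; exact ⟨t, by simp [h], h.2.symm⟩
    | cons u v =>
      simp at h
      obtain ⟨rfl, h⟩ := h
      rcases ih h with ⟨rfl, h1, h2⟩ | ⟨l, h1, h2⟩ | ⟨l, h1, h2⟩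
      · left; exact ⟨rfl, h1, h2⟩
      · right; left; exact ⟨l, by simp [h1], h2⟩
      · right; right; exact ⟨l, by simp [h1], h2⟩

theorem ED2.weak {Ax : EAx} {d k : ℕ} {G : LNSe} (h : ED2 Ax d k G) (w : Cmp) :
    ∀ (pre post : List Cmp) (c : Cmp) (ep), G = (pre ++ c :: post, ep) →
      ED2 Ax d k (pre ++ (c + w) :: post, ep) := by
  induction h with
  | mono _ h1 h2 ih => intro pre post c ep e; exact (ih pre post c ep e).mono h1 h2
  | @prop pre post ep p c qs d k hr hk _ ih =>
    intro pre' post' c' ep' e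
    obtain ⟨e1, rfl⟩ := Prod.mk.inj e; clear e
    rcases split_eq e1 with ⟨rfl, rfl, rfl⟩ | ⟨l, rfl, rfl⟩ | ⟨l, rfl, rfl⟩
    · rw [add_assoc]
      refine .prop hr hk fun q hq => ?_
      rw [← add_assoc]
      exact ih q hq _ _ _ _ rfl
    · have := ED2.prop (Ax := Ax) (d := d) (c := c) (post := l ++ (c' + w) :: post') (ep := ep)
        hr hk fun q hq => by
          simpa using ih q hq (pre ++ (q + c) :: l) post' c' ep (by simp)
      simpa using this
    · have := ED2.prop (Ax := Ax) (d := d) (c := c) (pre := pre' ++ (c' + w) :: l) (post := post) (ep := ep)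
        hr (by simpa using hk) fun q hq => by
          simpa using ih q hq pre' (l ++ (q + c) :: post) c' ep (by simp)
      simpa using this
  | @modal pre ep p c o qs d k hr hk _ ih =>
    intro pre' post' c' ep' e
    obtain ⟨e1, rfl⟩ := Prod.mk.inj e; clear e
    rcases split_eq e1 with ⟨rfl, rfl, rfl⟩ | ⟨l, rfl, h0⟩ | ⟨l, rfl, rfl⟩
    · rw [add_assoc]
      exact .modal hr hk fun q hq => ih q hq _ _ _ _ rfl
    · simp at h0
    · have := ED2.modal (Ax := Ax) (d := d) (c := c) (pre := pre' ++ (c' + w) :: l) (ep := ep)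
        hr (by simpa using hk) fun q hq => by
          simpa using ih q hq pre' (l ++ c :: q.1) c' q.2 (by simp)
      simpa using this

theorem ED2.up {Ax : EAx} {d k : ℕ} {pre post : List Cmp} {c R : Cmp} {ep} {m m' : ℕ}
    (hm : m ≤ m') (h : ED2 Ax d k (pre ++ (c + m • R) :: post, ep)) :
    ED2 Ax d k (pre ++ (c + m' • R) :: post, ep) := by
  obtain ⟨j, rfl⟩ := Nat.exists_eq_add_of_le hm
  have := h.weak (j • R) _ _ _ _ rfl
  rwa [add_assoc, ← add_nsmul] at this

theorem unif {α : Type} (qs : List α) (n : ℕ) (Q : α → ℕ → Prop)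
    (hQ : ∀ a m m', m ≤ m' → Q a m → Q a m') (h : ∀ q ∈ qs, ∃ m, n ≤ m ∧ Q q m) :
    ∃ m, n ≤ m ∧ ∀ q ∈ qs, Q q m := by
  induction qs with
  | nil => exact ⟨n, le_rfl, by simp⟩
  | cons a l ih =>
    obtain ⟨m1, h1, h2⟩ := ih fun q hq => h q (by simp [hq])
    obtain ⟨m2, h3, h4⟩ := h a (by simp)
    refine ⟨max m1 m2, by omega, fun q hq => ?_⟩
    rcases List.mem_cons.1 hq with rfl | hq
    · exact hQ _ _ _ (le_max_right _ _) h4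
    · exact hQ _ _ _ (le_max_left _ _) (h2 q hq)

/-- `f` can be split off from the context of `p`. -/
def Dsj (p f : Cmp) : Prop :=
  ∀ (c c' : Cmp) (n : ℕ), p + c = c' + n • f → ∃ e, c = e + n • f ∧ c' = p + e

theorem splitM {P C C' : Multiset Fm} {F : Fm} {n : ℕ} (hF : F ∉ P)
    (h : P + C = C' + n • ({F} : Multiset Fm)) :
    ∃ E, C = E + n • ({F} : Multiset Fm) ∧ C' = P + E := by
  classical
  rw [Multiset.nsmul_singleton] at h ⊢
  have h1 : Multiset.replicate n F ≤ C := by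
    rw [← Multiset.le_count_iff_replicate_le]
    have := congrArg (Multiset.count F) h
    simp [Multiset.count_eq_zero_of_notMem hF] at this
    omega
  obtain ⟨E, rfl⟩ := Multiset.le_iff_exists_add.1 h1
  refine ⟨E, add_comm _ _, ?_⟩
  have : (P + E) + Multiset.replicate n F = C' + Multiset.replicate n F := by
    rw [← h]; abel
  exact (add_right_cancel this).symm

theorem dsjL {p : Cmp} {F : Fm} (hF : F ∉ p.1) : Dsj p ({F}, 0) := by
  rintro ⟨c1, c2⟩ ⟨c1', c2'⟩ n h
  obtain ⟨p1, p2⟩ := p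
  simp only [Prod.smul_mk, Prod.mk_add_mk, smul_zero, add_zero, Prod.mk.injEq] at h
  obtain ⟨E, rfl, rfl⟩ := splitM hF h.1
  exact ⟨(E, c2), by simp, by simp [h.2]⟩

theorem dsjR {p : Cmp} {F : Fm} (hF : F ∉ p.2) : Dsj p (0, {F}) := by
  rintro ⟨c1, c2⟩ ⟨c1', c2'⟩ n h
  obtain ⟨p1, p2⟩ := p
  simp only [Prod.smul_mk, Prod.mk_add_mk, smul_zero, add_zero, Prod.mk.injEq] at h
  obtain ⟨E, rfl, rfl⟩ := splitM hF h.2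
  exact ⟨(c1, E), by simp, by simp [h.1]⟩

theorem ED2.inv {Ax : EAx} {d k : ℕ} {G : LNSe} (h : ED2 Ax d k G) (f R : Cmp)
    (hP : ∀ p qs, PRule p qs → (p = f ∧ (R ∈ qs ∨ f + f ∈ qs)) ∨ Dsj p f)
    (hM : ∀ p ep o qs, MRule Ax p ep o qs → Dsj p f) :
    ∀ (n : ℕ) (pre post : List Cmp) (c : Cmp) (ep), G = (pre ++ (c + n • f) :: post, ep) →
      ∃ m, n ≤ m ∧ ED2 Ax d k (pre ++ (c + m • R) :: post, ep) := by
  induction h with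
  | mono _ h1 h2 ih =>
    intro n pre post c ep e
    obtain ⟨m, hm, h⟩ := ih n pre post c ep e
    exact ⟨m, hm, h.mono h1 h2⟩
  | @prop pre post ep p c qs d k hr hk h0 ih =>
    intro n pre' post' c' ep' e
    obtain ⟨e1, rfl⟩ := Prod.mk.inj e; clear e
    rcases split_eq e1 with ⟨rfl, e, rfl⟩ | ⟨l, rfl, rfl⟩ | ⟨l, rfl, rfl⟩
    · rcases hP _ _ hr with ⟨rfl, hq⟩ | hd
      · cases n with
        | zero =>
          refine ⟨0, le_rfl, ?_⟩
          have := ED2.prop hr hk h0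
          rw [e] at this
          simpa using this
        | succ n =>
          have e' : c = c' + n • p := by
            rw [succ_nsmul', ← add_assoc, add_comm c' p, add_assoc] at e
            exact add_left_cancel e
          subst e'
          rcases hq with hq | hq
          · obtain ⟨m, hm, h⟩ := ih _ hq n pre post (R + c') ep (by rw [add_assoc])
            refine ⟨m + 1, by omega, ?_⟩
            have h := h.mono (Nat.le_succ d) le_rfl
            rwa [add_comm R, add_assoc, ← succ_nsmul'] at h
          · obtain ⟨m, hm, h⟩ := ih _ hq (n + 2) pre post c' ep (by
              congr 3; rw [add_nsmul, two_nsmul]; abel)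
            exact ⟨m, by omega, h.mono (Nat.le_succ d) le_rfl⟩
      · obtain ⟨E, rfl, rfl⟩ := hd _ _ _ e
        obtain ⟨m, hm, h⟩ := unif qs n
          (fun q m => ED2 Ax d k (pre ++ (q + E + m • R) :: post, ep))
          (fun _ _ _ hm h => h.up hm)
          (fun q hq => ih q hq n pre post (q + E) ep (by rw [add_assoc]))
        refine ⟨m, hm, ?_⟩
        rw [add_assoc]
        refine .prop hr hk fun q hq => ?_
        rw [← add_assoc]
        exact h q hq
    · obtain ⟨m, hm, h⟩ := unif qs n
          (fun q m => ED2 Ax d k ((pre ++ (q + c) :: l) ++ (c' + m • R) :: post', ep))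
          (fun _ _ _ hm h => h.up hm)
          (fun q hq => ih q hq n (pre ++ (q + c) :: l) post' c' ep (by simp))
      refine ⟨m, hm, ?_⟩
      have := ED2.prop (Ax := Ax) (d := d) (c := c) (post := l ++ (c' + m • R) :: post') (ep := ep)
        hr hk fun q hq => by simpa using h q hq
      simpa using this
    · obtain ⟨m, hm, h⟩ := unif qs n
          (fun q m => ED2 Ax d k (pre' ++ (c' + m • R) :: (l ++ (q + c) :: post), ep))
          (fun _ _ _ hm h => h.up hm)
          (fun q hq => ih q hq n pre' (l ++ (q + c) :: post) c' ep (by simp))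
      refine ⟨m, hm, ?_⟩
      have := ED2.prop (Ax := Ax) (d := d) (c := c) (pre := pre' ++ (c' + m • R) :: l)
        (post := post) (ep := ep)
        hr (by simpa using hk) fun q hq => by simpa using h q hq
      simpa using this
  | @modal pre ep p c o qs d k hr hk h0 ih =>
    intro n pre' post' c' ep' e
    obtain ⟨e1, rfl⟩ := Prod.mk.inj e; clear e
    rcases split_eq e1 with ⟨rfl, e, rfl⟩ | ⟨l, rfl, h0⟩ | ⟨l, rfl, rfl⟩
    · obtain ⟨E, rfl, rfl⟩ := hM _ _ _ _ hr _ _ _ e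
      obtain ⟨m, hm, h⟩ := unif qs n
          (fun q m => ED2 Ax d k (pre ++ (E + m • R) :: q.1, q.2))
          (fun _ _ _ hm h => h.up hm)
          (fun q hq => ih q hq n pre q.1 E q.2 rfl)
      refine ⟨m, hm, ?_⟩
      rw [add_assoc]
      exact .modal hr hk h
    · simp at h0
    · obtain ⟨m, hm, h⟩ := unif qs n
          (fun q m => ED2 Ax d k (pre' ++ (c' + m • R) :: (l ++ c :: q.1), q.2))
          (fun _ _ _ hm h => h.up hm)
          (fun q hq => ih q hq n pre' (l ++ c :: q.1) c' q.2 (by simp))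
      refine ⟨m, hm, ?_⟩
      have := ED2.modal (Ax := Ax) (d := d) (c := c) (pre := pre' ++ (c' + m • R) :: l) (ep := ep)
        hr (by simpa using hk) fun q hq => by simpa using h q hq
      simpa using this

theorem invL (Ax : EAx) (F : Fm) (X Y : Multiset Fm)
    (hb : ∀ B, F ≠ .box B)
    (hP : ∀ qs, PRule ({F}, 0) qs → (X, Y) ∈ qs ∨ (({F}, 0) + ({F}, 0) : Cmp) ∈ qs)
    (hv : ∀ m, F ≠ .var m)
    (d k : ℕ) (pre post : List Cmp) (ep : Option (Cmp × Cmp))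
    (Γ Δ : Multiset Fm) (n : ℕ)
    (h : EDn Ax true d k (pre ++ (Γ + rep n F, Δ) :: post, ep)) :
    ∃ j, EDn Ax true d k (pre ++ (Γ + (n + j) • X, (n + j) • Y + Δ) :: post, ep) := by
  obtain ⟨m, hm, h'⟩ := (ED2.of h).inv ({F}, 0) (X, Y)
    (by
      intro p qs hr
      by_cases hF : F ∈ p.1
      · left
        have : p = ({F}, 0) := by
          cases hr <;> simp at hF <;> first | exact absurd hF (hv _) | simp [hF]
        subst this
        exact ⟨rfl, hP _ hr⟩
      · exact .inr (dsjL hF))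
    (by
      intro p ep o qs hr
      refine dsjL fun hF => ?_
      cases hr <;> simp at hF <;> exact hb _ hF)
    n pre post (Γ, Δ) ep (by simp [rep, Multiset.nsmul_singleton])
  obtain ⟨j, rfl⟩ := Nat.exists_eq_add_of_le hm
  refine ⟨j, ?_⟩
  have := h'.to
  simpa only [Prod.smul_mk, Prod.mk_add_mk, add_comm Δ] using this

theorem invR (Ax : EAx) (F : Fm) (X Y : Multiset Fm)
    (hb : ∀ B, F ≠ .box B)
    (hP : ∀ qs, PRule (0, {F}) qs → (X, Y) ∈ qs ∨ ((0, {F}) + (0, {F}) : Cmp) ∈ qs)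
    (hv : ∀ m, F ≠ .var m)
    (d k : ℕ) (pre post : List Cmp) (ep : Option (Cmp × Cmp))
    (Γ Δ : Multiset Fm) (n : ℕ)
    (h : EDn Ax true d k (pre ++ (Γ, rep n F + Δ) :: post, ep)) :
    ∃ j, EDn Ax true d k (pre ++ (Γ + (n + j) • X, (n + j) • Y + Δ) :: post, ep) := by
  obtain ⟨m, hm, h'⟩ := (ED2.of h).inv (0, {F}) (X, Y)
    (by
      intro p qs hr
      by_cases hF : F ∈ p.2
      · left
        have : p = (0, {F}) := by
          cases hr <;> simp at hF <;> first | exact absurd hF (hv _) | simp [hF]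
        subst this
        exact ⟨rfl, hP _ hr⟩
      · exact .inr (dsjR hF))
    (by
      intro p ep o qs hr
      refine dsjR fun hF => ?_
      cases hr <;> simp at hF <;> exact hb _ hF)
    n pre post (Γ, Δ) ep (by simp [rep, Multiset.nsmul_singleton, add_comm])
  obtain ⟨j, rfl⟩ := Nat.exists_eq_add_of_le hm
  refine ⟨j, ?_⟩
  have := h'.to
  simpa only [Prod.smul_mk, Prod.mk_add_mk, add_comm Δ] using this

theorem rep_eq (n : ℕ) (A : Fm) : rep n A = n • ({A} : Multiset Fm) := by
  simp [rep, Multiset.nsmul_singleton]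

theorem pruleL {F : Fm} {qs : List Cmp} (h : PRule ({F}, 0) qs) :
    (({F}, 0) + ({F}, 0) : Cmp) ∈ qs ∨
    (F = .bot) ∨ (∃ A, F = .neg A ∧ qs = [(0, {A})]) ∨
    (∃ A B, F = .and A B ∧ qs = [({A, B}, 0)]) ∨
    (∃ A B, F = .or A B ∧ qs = [({A}, 0), ({B}, 0)]) ∨
    (∃ A B, F = .imp A B ∧ qs = [({B}, 0), (0, {A})]) := by
  generalize hp : (({F}, 0) : Cmp) = p at h
  cases h <;> simp at hp <;> subst hp <;> simp

theorem pruleR {F : Fm} {qs : List Cmp} (h : PRule (0, {F}) qs) :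
    ((0, {F}) + (0, {F}) : Cmp) ∈ qs ∨
    (F = .top) ∨ (∃ A, F = .neg A ∧ qs = [({A}, 0)]) ∨
    (∃ A B, F = .and A B ∧ qs = [(0, {A}), (0, {B})]) ∨
    (∃ A B, F = .or A B ∧ qs = [(0, {A, B})]) ∨
    (∃ A B, F = .imp A B ∧ qs = [({A}, {B})]) := by
  generalize hp : ((0, {F}) : Cmp) = p at h
  cases h <;> simp at hp <;> subst hp <;> simp

theorem useL {F : Fm} {R : Cmp} {qs : List Cmp} (h' : PRule ({F}, 0) qs)
    (hR : F ≠ .bot ∧ (∀ A, F = .neg A → R = (0, {A})) ∧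
      (∀ A B, F = .and A B → R = ({A, B}, 0)) ∧
      (∀ A B, F = .or A B → R = ({A}, 0) ∨ R = ({B}, 0)) ∧
      (∀ A B, F = .imp A B → R = ({B}, 0) ∨ R = (0, {A}))) :
    R ∈ qs ∨ (({F}, 0) + ({F}, 0) : Cmp) ∈ qs := by
  obtain ⟨h0, h1, h2, h3, h4⟩ := hR
  rcases pruleL h' with h | h | ⟨A, h, rfl⟩ | ⟨A, B, h, rfl⟩ | ⟨A, B, h, rfl⟩ | ⟨A, B, h, rfl⟩
  · exact .inr h
  · exact absurd h h0
  · left; simp [h1 A h]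
  · left; simp [h2 A B h]
  · left; rcases h3 A B h with h | h <;> simp [h]
  · left; rcases h4 A B h with h | h <;> simp [h]

theorem useR {F : Fm} {R : Cmp} {qs : List Cmp} (h' : PRule (0, {F}) qs)
    (hR : F ≠ .top ∧ (∀ A, F = .neg A → R = ({A}, 0)) ∧
      (∀ A B, F = .and A B → R = (0, {A}) ∨ R = (0, {B})) ∧
      (∀ A B, F = .or A B → R = (0, {A, B})) ∧
      (∀ A B, F = .imp A B → R = ({A}, {B}))) :
    R ∈ qs ∨ ((0, {F}) + (0, {F}) : Cmp) ∈ qs := by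
  obtain ⟨h0, h1, h2, h3, h4⟩ := hR
  rcases pruleR h' with h | h | ⟨A, h, rfl⟩ | ⟨A, B, h, rfl⟩ | ⟨A, B, h, rfl⟩ | ⟨A, B, h, rfl⟩
  · exact .inr h
  · exact absurd h h0
  · left; simp [h1 A h]
  · left; rcases h2 A B h with h | h <;> simp [h]
  · left; simp [h3 A B h]
  · left; simp [h4 A B h]

theorem pair_nsmul (n : ℕ) (A B : Fm) :
    n • ({A, B} : Multiset Fm) = rep n A + rep n B := by
  rw [rep_eq, rep_eq, ← nsmul_add]; rfl

/-- Multi-invertibility of the (non-end-active versions of the) propositional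
rules in `LNS_E𝒜Con`, preserving both the depth of the derivation and the
minimal level of the active components of rule applications. -/
theorem m_invertibility (Ax : EAx) :
    (∀ (d k : ℕ) (pre post : List Cmp) (ep : Option (Cmp × Cmp))
        (Γ Δ : Multiset Fm) (A : Fm) (n : ℕ), 1 ≤ n →
      EDn Ax true d k (pre ++ (Γ + rep n (Fm.neg A), Δ) :: post, ep) →
      ∃ j, EDn Ax true d k (pre ++ (Γ, rep (n + j) A + Δ) :: post, ep)) ∧
    (∀ (d k : ℕ) (pre post : List Cmp) (ep : Option (Cmp × Cmp))
        (Γ Δ : Multiset Fm) (A : Fm) (n : ℕ), 1 ≤ n →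
      EDn Ax true d k (pre ++ (Γ, rep n (Fm.neg A) + Δ) :: post, ep) →
      ∃ j, EDn Ax true d k (pre ++ (Γ + rep (n + j) A, Δ) :: post, ep)) ∧
    (∀ (d k : ℕ) (pre post : List Cmp) (ep : Option (Cmp × Cmp))
        (Γ Δ : Multiset Fm) (A B : Fm) (n : ℕ), 1 ≤ n →
      EDn Ax true d k (pre ++ (Γ + rep n (Fm.imp A B), Δ) :: post, ep) →
      (∃ j, EDn Ax true d k (pre ++ (Γ + rep (n + j) B, Δ) :: post, ep)) ∧
      (∃ j, EDn Ax true d k (pre ++ (Γ, rep (n + j) A + Δ) :: post, ep))) ∧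
    (∀ (d k : ℕ) (pre post : List Cmp) (ep : Option (Cmp × Cmp))
        (Γ Δ : Multiset Fm) (A B : Fm) (n : ℕ), 1 ≤ n →
      EDn Ax true d k (pre ++ (Γ, rep n (Fm.imp A B) + Δ) :: post, ep) →
      ∃ j j', EDn Ax true d k
        (pre ++ (Γ + rep (n + j) A, rep (n + j') B + Δ) :: post, ep)) ∧
    (∀ (d k : ℕ) (pre post : List Cmp) (ep : Option (Cmp × Cmp))
        (Γ Δ : Multiset Fm) (A B : Fm) (n : ℕ), 1 ≤ n →
      EDn Ax true d k (pre ++ (Γ + rep n (Fm.or A B), Δ) :: post, ep) →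
      (∃ j, EDn Ax true d k (pre ++ (Γ + rep (n + j) A, Δ) :: post, ep)) ∧
      (∃ j, EDn Ax true d k (pre ++ (Γ + rep (n + j) B, Δ) :: post, ep))) ∧
    (∀ (d k : ℕ) (pre post : List Cmp) (ep : Option (Cmp × Cmp))
        (Γ Δ : Multiset Fm) (A B : Fm) (n : ℕ), 1 ≤ n →
      EDn Ax true d k (pre ++ (Γ, rep n (Fm.or A B) + Δ) :: post, ep) →
      ∃ j j', EDn Ax true d k
        (pre ++ (Γ, rep (n + j) A + rep (n + j') B + Δ) :: post, ep)) ∧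
    (∀ (d k : ℕ) (pre post : List Cmp) (ep : Option (Cmp × Cmp))
        (Γ Δ : Multiset Fm) (A B : Fm) (n : ℕ), 1 ≤ n →
      EDn Ax true d k (pre ++ (Γ + rep n (Fm.and A B), Δ) :: post, ep) →
      ∃ j j', EDn Ax true d k
        (pre ++ (Γ + rep (n + j) A + rep (n + j') B, Δ) :: post, ep)) ∧
    (∀ (d k : ℕ) (pre post : List Cmp) (ep : Option (Cmp × Cmp))
        (Γ Δ : Multiset Fm) (A B : Fm) (n : ℕ), 1 ≤ n →
      EDn Ax true d k (pre ++ (Γ, rep n (Fm.and A B) + Δ) :: post, ep) →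
      (∃ j, EDn Ax true d k (pre ++ (Γ, rep (n + j) A + Δ) :: post, ep)) ∧
      (∃ j, EDn Ax true d k (pre ++ (Γ, rep (n + j) B + Δ) :: post, ep))) := by
  refine ⟨?_, ?_, ?_, ?_, ?_, ?_, ?_, ?_⟩
  · intro d k pre post ep Γ Δ A n _ h
    simpa [rep_eq] using invL Ax (.neg A) 0 {A} (by simp)
      (fun qs h => useL h (by simp)) (by simp) d k pre post ep Γ Δ n h
  · intro d k pre post ep Γ Δ A n _ h
    simpa [rep_eq] using invR Ax (.neg A) {A} 0 (by simp)
      (fun qs h => useR h (by simp)) (by simp) d k pre post ep Γ Δ n h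
  · intro d k pre post ep Γ Δ A B n _ h
    constructor
    · simpa [rep_eq] using invL Ax (.imp A B) {B} 0 (by simp)
        (fun qs h => useL h (by simp)) (by simp) d k pre post ep Γ Δ n h
    · simpa [rep_eq] using invL Ax (.imp A B) 0 {A} (by simp)
        (fun qs h => useL h (by simp)) (by simp) d k pre post ep Γ Δ n h
  · intro d k pre post ep Γ Δ A B n _ h
    obtain ⟨j, hj⟩ := invR Ax (.imp A B) {A} {B} (by simp)
      (fun qs h => useR h (by simp)) (by simp) d k pre post ep Γ Δ n h
    exact ⟨j, j, by simpa only [rep_eq] using hj⟩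
  · intro d k pre post ep Γ Δ A B n _ h
    constructor
    · simpa [rep_eq] using invL Ax (.or A B) {A} 0 (by simp)
        (fun qs h => useL h (by simp)) (by simp) d k pre post ep Γ Δ n h
    · simpa [rep_eq] using invL Ax (.or A B) {B} 0 (by simp)
        (fun qs h => useL h (by simp)) (by simp) d k pre post ep Γ Δ n h
  · intro d k pre post ep Γ Δ A B n _ h
    obtain ⟨j, hj⟩ := invR Ax (.or A B) 0 {A, B} (by simp)
      (fun qs h => useR h (by simp)) (by simp) d k pre post ep Γ Δ n h
    exact ⟨j, j, by simpa only [pair_nsmul, smul_zero, add_zero] using hj⟩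
  · intro d k pre post ep Γ Δ A B n _ h
    obtain ⟨j, hj⟩ := invL Ax (.and A B) {A, B} 0 (by simp)
      (fun qs h => useL h (by simp)) (by simp) d k pre post ep Γ Δ n h
    exact ⟨j, j, by simpa only [pair_nsmul, smul_zero, zero_add, add_assoc] using hj⟩
  · intro d k pre post ep Γ Δ A B n _ h
    constructor
    · simpa [rep_eq] using invR Ax (.and A B) 0 {A} (by simp)
        (fun qs h => useR h (by simp)) (by simp) d k pre post ep Γ Δ n h
    · simpa [rep_eq] using invR Ax (.and A B) 0 {B} (by simp)
        (fun qs h => useR h (by simp)) (by simp) d k pre post ep Γ Δ n h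
end

section
/- For every 𝒜 ⊆ {M, C, N}, if a linear nested sequent Γ ⇒ Δ (consisting of a single component) is derivable in LNS_E𝒜Con, then it is derivable in the end-active variant of LNS_E𝒜Con. -/
/-- The end-active variant of the calculus `LNS_E𝒜` (optionally with internal
contraction `con` and weakening `wk`): all rule applications are restricted so
that the active components are the rightmost ones.  The modal rules are always
end-active; the propositional and structural rules are restricted to the last
component. -/
inductive EDe (Ax : EAx) (con wk : Bool) : LNSe → Prop
  | init {pre : List Cmp} {Γ Δ : Multiset Fm} {m : ℕ} :
      EDe Ax con wk (pre ++ [(Fm.var m ::ₘ Γ, Fm.var m ::ₘ Δ)], none)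
  | botL {pre Γ Δ} :
      EDe Ax con wk (pre ++ [(Fm.bot ::ₘ Γ, Δ)], none)
  | topR {pre Γ Δ} :
      EDe Ax con wk (pre ++ [(Γ, Fm.top ::ₘ Δ)], none)
  | negL {pre Γ Δ A} :
      EDe Ax con wk (pre ++ [(Γ, A ::ₘ Δ)], none) →
      EDe Ax con wk (pre ++ [(Fm.neg A ::ₘ Γ, Δ)], none)
  | negR {pre Γ Δ A} :
      EDe Ax con wk (pre ++ [(A ::ₘ Γ, Δ)], none) →
      EDe Ax con wk (pre ++ [(Γ, Fm.neg A ::ₘ Δ)], none)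
  | andL {pre Γ Δ A B} :
      EDe Ax con wk (pre ++ [(A ::ₘ B ::ₘ Γ, Δ)], none) →
      EDe Ax con wk (pre ++ [(Fm.and A B ::ₘ Γ, Δ)], none)
  | andR {pre Γ Δ A B} :
      EDe Ax con wk (pre ++ [(Γ, A ::ₘ Δ)], none) →
      EDe Ax con wk (pre ++ [(Γ, B ::ₘ Δ)], none) →
      EDe Ax con wk (pre ++ [(Γ, Fm.and A B ::ₘ Δ)], none)
  | orL {pre Γ Δ A B} :
      EDe Ax con wk (pre ++ [(A ::ₘ Γ, Δ)], none) →
      EDe Ax con wk (pre ++ [(B ::ₘ Γ, Δ)], none) →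
      EDe Ax con wk (pre ++ [(Fm.or A B ::ₘ Γ, Δ)], none)
  | orR {pre Γ Δ A B} :
      EDe Ax con wk (pre ++ [(Γ, A ::ₘ B ::ₘ Δ)], none) →
      EDe Ax con wk (pre ++ [(Γ, Fm.or A B ::ₘ Δ)], none)
  | impL {pre Γ Δ A B} :
      EDe Ax con wk (pre ++ [(B ::ₘ Γ, Δ)], none) →
      EDe Ax con wk (pre ++ [(Γ, A ::ₘ Δ)], none) →
      EDe Ax con wk (pre ++ [(Fm.imp A B ::ₘ Γ, Δ)], none)
  | impR {pre Γ Δ A B} :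
      EDe Ax con wk (pre ++ [(A ::ₘ Γ, B ::ₘ Δ)], none) →
      EDe Ax con wk (pre ++ [(Γ, Fm.imp A B ::ₘ Δ)], none)
  | conL {pre Γ Δ A} : con = true →
      EDe Ax con wk (pre ++ [(A ::ₘ A ::ₘ Γ, Δ)], none) →
      EDe Ax con wk (pre ++ [(A ::ₘ Γ, Δ)], none)
  | conR {pre Γ Δ A} : con = true →
      EDe Ax con wk (pre ++ [(Γ, A ::ₘ A ::ₘ Δ)], none) →
      EDe Ax con wk (pre ++ [(Γ, A ::ₘ Δ)], none)
  | wkL {pre Γ Δ A} : wk = true →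
      EDe Ax con wk (pre ++ [(Γ, Δ)], none) →
      EDe Ax con wk (pre ++ [(A ::ₘ Γ, Δ)], none)
  | wkR {pre Γ Δ A} : wk = true →
      EDe Ax con wk (pre ++ [(Γ, Δ)], none) →
      EDe Ax con wk (pre ++ [(Γ, A ::ₘ Δ)], none)
  | boxRe {G Γ Δ B} :
      EDe Ax con wk (G ++ [(Γ, Δ)], some ((0, {B}), ({B}, 0))) →
      EDe Ax con wk (G ++ [(Γ, Fm.box B ::ₘ Δ)], none)
  | boxLe {G Γ Δ Sg Pp Om Th A} :
      EDe Ax con wk (G ++ [(Γ, Δ), (A ::ₘ Sg, Pp)], none) →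
      EDe Ax con wk (G ++ [(Γ, Δ), (Om, A ::ₘ Th)], none) →
      EDe Ax con wk (G ++ [(Fm.box A ::ₘ Γ, Δ)], some ((Sg, Pp), (Om, Th)))
  | ruleN {G Γ Δ B} : Ax.n = true →
      EDe Ax con wk (G ++ [(Γ, Δ), (0, {B})], none) →
      EDe Ax con wk (G ++ [(Γ, Fm.box B ::ₘ Δ)], none)
  | ruleM {c G Sg Pp Om Th} : Ax.m = true →
      EDe Ax con wk (c :: G, some ((Sg, Pp), (Fm.bot ::ₘ Om, Th))) →
      EDe Ax con wk (c :: G, some ((Sg, Pp), (Om, Th)))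
  | ruleC {G Γ Δ Sg Pp Om Th A} : Ax.c = true →
      EDe Ax con wk (G ++ [(Γ, Δ)], some ((A ::ₘ Sg, Pp), (Om, Th))) →
      EDe Ax con wk (G ++ [(Γ, Δ), (Om, A ::ₘ Th)], none) →
      EDe Ax con wk (G ++ [(Fm.box A ::ₘ Γ, Δ)], some ((Sg, Pp), (Om, Th)))

/-- Auxiliary plain sequent calculus. -/
inductive SQ (Ax : EAx) : Multiset Fm → Multiset Fm → Prop
  | init {Γ Δ m} : SQ Ax (Fm.var m ::ₘ Γ) (Fm.var m ::ₘ Δ)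
  | botL {Γ Δ} : SQ Ax (Fm.bot ::ₘ Γ) Δ
  | topR {Γ Δ} : SQ Ax Γ (Fm.top ::ₘ Δ)
  | negL {Γ Δ A} : SQ Ax Γ (A ::ₘ Δ) → SQ Ax (Fm.neg A ::ₘ Γ) Δ
  | negR {Γ Δ A} : SQ Ax (A ::ₘ Γ) Δ → SQ Ax Γ (Fm.neg A ::ₘ Δ)
  | andL {Γ Δ A B} : SQ Ax (A ::ₘ B ::ₘ Γ) Δ → SQ Ax (Fm.and A B ::ₘ Γ) Δ
  | andR {Γ Δ A B} : SQ Ax Γ (A ::ₘ Δ) → SQ Ax Γ (B ::ₘ Δ) → SQ Ax Γ (Fm.and A B ::ₘ Δ)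
  | orL {Γ Δ A B} : SQ Ax (A ::ₘ Γ) Δ → SQ Ax (B ::ₘ Γ) Δ → SQ Ax (Fm.or A B ::ₘ Γ) Δ
  | orR {Γ Δ A B} : SQ Ax Γ (A ::ₘ B ::ₘ Δ) → SQ Ax Γ (Fm.or A B ::ₘ Δ)
  | impL {Γ Δ A B} : SQ Ax (B ::ₘ Γ) Δ → SQ Ax Γ (A ::ₘ Δ) → SQ Ax (Fm.imp A B ::ₘ Γ) Δ
  | impR {Γ Δ A B} : SQ Ax (A ::ₘ Γ) (B ::ₘ Δ) → SQ Ax Γ (Fm.imp A B ::ₘ Δ)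
  | conL {Γ Δ A} : SQ Ax (A ::ₘ A ::ₘ Γ) Δ → SQ Ax (A ::ₘ Γ) Δ
  | conR {Γ Δ A} : SQ Ax Γ (A ::ₘ A ::ₘ Δ) → SQ Ax Γ (A ::ₘ Δ)
  | ruleN {Γ Δ B} : Ax.n = true → SQ Ax 0 {B} → SQ Ax Γ (Fm.box B ::ₘ Δ)
  | modal {Γ Δ A B} {As : Multiset Fm} {n : ℕ} : (n = 0 ∨ Ax.m = true) → (As = 0 ∨ Ax.c = true) →
      SQ Ax (A ::ₘ As) {B} →
      SQ Ax (Multiset.replicate n Fm.bot + {B}) {A} →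
      (∀ C ∈ As, SQ Ax (Multiset.replicate n Fm.bot + {B}) {C}) →
      SQ Ax (Fm.box A ::ₘ (As.map Fm.box + Γ)) (Fm.box B ::ₘ Δ)

theorem SQ.weak {Ax Γ Δ} (h : SQ Ax Γ Δ) (X Y : Multiset Fm) : SQ Ax (Γ + X) (Δ + Y) := by
  induction h with
  | modal h1 h2 h3 h4 h5 =>
    simp only [Multiset.cons_add, add_assoc]
    exact .modal h1 h2 h3 h4 h5
  | ruleN h1 h2 => simp only [Multiset.cons_add]; exact .ruleN h1 h2
  | init => simp only [Multiset.cons_add]; exact .init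
  | botL => simp only [Multiset.cons_add]; exact .botL
  | topR => simp only [Multiset.cons_add]; exact .topR
  | negL _ i => simp only [Multiset.cons_add] at *; exact .negL i
  | negR _ i => simp only [Multiset.cons_add] at *; exact .negR i
  | andL _ i => simp only [Multiset.cons_add] at *; exact .andL i
  | andR _ _ i j => simp only [Multiset.cons_add] at *; exact .andR i j
  | orL _ _ i j => simp only [Multiset.cons_add] at *; exact .orL i j
  | orR _ i => simp only [Multiset.cons_add] at *; exact .orR i
  | impL _ _ i j => simp only [Multiset.cons_add] at *; exact .impL i j
  | impR _ i => simp only [Multiset.cons_add] at *; exact .impR i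
  | conL _ i => simp only [Multiset.cons_add] at *; exact .conL i
  | conR _ i => simp only [Multiset.cons_add] at *; exact .conR i

theorem EDe_C {Ax : EAx} {pre Γ Δ B Om A} (As : Multiset Fm) :
    ∀ (Sg : Multiset Fm), (As = 0 ∨ Ax.c = true) →
    (∀ pre, EDe Ax true false (pre ++ [(A ::ₘ (As + Sg), {B})], none)) →
    (∀ pre, EDe Ax true false (pre ++ [(Om, {A})], none)) →
    (∀ C ∈ As, ∀ pre, EDe Ax true false (pre ++ [(Om, {C})], none)) →
    EDe Ax true false (pre ++ [(Fm.box A ::ₘ (As.map Fm.box + Γ), Δ)],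
      some ((Sg, {B}), (Om, 0))) := by
  induction As using Multiset.induction with
  | empty =>
    intro Sg _ h1 h2 _
    simp only [Multiset.map_zero, zero_add] at *
    apply EDe.boxLe
    · simpa using h1 (pre ++ [(Γ, Δ)])
    · simpa using h2 (pre ++ [(Γ, Δ)])
  | cons C As ih =>
    intro Sg hc h1 h2 h3
    have hc : Ax.c = true := by simpa using hc
    rw [Multiset.map_cons, Multiset.cons_add, Multiset.cons_swap]
    apply EDe.ruleC hc
    · apply ih _ (Or.inr hc) _ h2 (fun D hD => h3 D (Multiset.mem_cons_of_mem hD))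
      intro pre
      simpa using h1 pre
    · simpa using h3 C (by simp) (pre ++ [(Fm.box A ::ₘ (As.map Fm.box + Γ), Δ)])

theorem EDe_M {Ax : EAx} {L : List Cmp} {Sg Pp Th} (hL : L ≠ []) (n : ℕ) :
    ∀ (Om : Multiset Fm), (n = 0 ∨ Ax.m = true) →
    EDe Ax true false (L, some ((Sg, Pp), (Multiset.replicate n Fm.bot + Om, Th))) →
    EDe Ax true false (L, some ((Sg, Pp), (Om, Th))) := by
  induction n with
  | zero => intro Om _ h; simpa using h
  | succ n ih =>
    intro Om hm h
    have hm : Ax.m = true := by simpa using hm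
    cases L with
    | nil => exact absurd rfl hL
    | cons c G =>
      apply EDe.ruleM hm
      apply ih _ (Or.inr hm)
      simpa [Multiset.replicate_succ] using h

theorem SQ.toEDe {Ax Γ Δ} (h : SQ Ax Γ Δ) :
    ∀ pre, EDe Ax true false (pre ++ [(Γ, Δ)], none) := by
  induction h with
  | modal h1 h2 h3 h4 h5 i3 i4 i5 =>
    intro pre
    apply EDe.boxRe
    apply EDe_M (by simp) _ _ h1
    exact EDe_C _ _ h2 (by simpa using i3) i4 i5
  | @ruleN Γ Δ B h1 _ i =>
    intro pre
    apply EDe.ruleN h1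
    simpa using i (pre ++ [(Γ, Δ)])
  | init => intro pre; exact .init
  | botL => intro pre; exact .botL
  | topR => intro pre; exact .topR
  | negL _ i => intro pre; exact .negL (i pre)
  | negR _ i => intro pre; exact .negR (i pre)
  | andL _ i => intro pre; exact .andL (i pre)
  | andR _ _ i j => intro pre; exact .andR (i pre) (j pre)
  | orL _ _ i j => intro pre; exact .orL (i pre) (j pre)
  | orR _ i => intro pre; exact .orR (i pre)
  | impL _ _ i j => intro pre; exact .impL (i pre) (j pre)
  | impR _ i => intro pre; exact .impR (i pre)
  | conL _ i => intro pre; exact .conL rfl (i pre)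
  | conR _ i => intro pre; exact .conR rfl (i pre)

def QQ (Ax : EAx) (X Y : Multiset Fm) : List Cmp → Prop
  | [] => False
  | c :: l => ((l = [] → SQ Ax (c.1 + X) (c.2 + Y)) ∧ (l ≠ [] → SQ Ax c.1 c.2)) ∨ QQ Ax X Y l

theorem QQ_app {Ax X Y} {pre post : List Cmp} {c : Cmp} :
    QQ Ax X Y (pre ++ c :: post) ↔ (∃ d ∈ pre, SQ Ax d.1 d.2) ∨
      ((post = [] → SQ Ax (c.1 + X) (c.2 + Y)) ∧ (post ≠ [] → SQ Ax c.1 c.2)) ∨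
      QQ Ax X Y post := by
  induction pre with
  | nil => simp [QQ]
  | cons d pre ih =>
    rw [List.cons_append, QQ, ih]
    simp [or_assoc]

def PP (Ax : EAx) : LNSe → Prop
  | (L, none) => QQ Ax 0 0 L
  | (L, some p) => ∀ (As : Multiset Fm) (B : Fm) (n : ℕ),
      p = ((As, {B}), (Multiset.replicate n Fm.bot + {B}, 0)) →
      (n = 0 ∨ Ax.m = true) → (As = 0 ∨ Ax.c = true) →
      (∀ C ∈ As, SQ Ax (Multiset.replicate n Fm.bot + {B}) {C}) →
      QQ Ax (As.map Fm.box) {Fm.box B} L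

theorem PP_zero {Ax pre post Γ Δ ep} (h : ∀ X Y, SQ Ax (Γ + X) (Δ + Y)) :
    PP Ax (pre ++ (Γ, Δ) :: post, ep) := by
  have h0 := h 0 0
  simp only [add_zero] at h0
  cases ep with
  | none => exact QQ_app.2 (.inr (.inl ⟨fun _ => h _ _, fun _ => h0⟩))
  | some p => intro _ _ _ _ _ _ _; exact QQ_app.2 (.inr (.inl ⟨fun _ => h _ _, fun _ => h0⟩))

theorem QQ_two {Ax pre post Γ Δ Γ1 Δ1 Γ2 Δ2 X Y}
    (h : ∀ X Y, SQ Ax (Γ1 + X) (Δ1 + Y) → SQ Ax (Γ2 + X) (Δ2 + Y) → SQ Ax (Γ + X) (Δ + Y))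
    (h1 : QQ Ax X Y (pre ++ (Γ1, Δ1) :: post)) (h2 : QQ Ax X Y (pre ++ (Γ2, Δ2) :: post)) :
    QQ Ax X Y (pre ++ (Γ, Δ) :: post) := by
  have h0 := h 0 0
  simp only [add_zero] at h0
  rw [QQ_app] at h1 h2 ⊢
  rcases h1 with h1 | h1 | h1
  · exact .inl h1
  · rcases h2 with h2 | h2 | h2
    · exact .inl h2
    · exact .inr (.inl ⟨fun e => h X Y (h1.1 e) (h2.1 e), fun e => h0 (h1.2 e) (h2.2 e)⟩)
    · exact .inr (.inr h2)
  · exact .inr (.inr h1)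

theorem PP_two {Ax pre post Γ Δ Γ1 Δ1 Γ2 Δ2 ep}
    (h : ∀ X Y, SQ Ax (Γ1 + X) (Δ1 + Y) → SQ Ax (Γ2 + X) (Δ2 + Y) → SQ Ax (Γ + X) (Δ + Y))
    (h1 : PP Ax (pre ++ (Γ1, Δ1) :: post, ep)) (h2 : PP Ax (pre ++ (Γ2, Δ2) :: post, ep)) :
    PP Ax (pre ++ (Γ, Δ) :: post, ep) := by
  cases ep with
  | none => exact QQ_two h h1 h2
  | some p =>
    intro As B n a b c d
    exact QQ_two h (h1 As B n a b c d) (h2 As B n a b c d)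

theorem PP_one {Ax pre post Γ Δ Γ1 Δ1 ep}
    (h : ∀ X Y, SQ Ax (Γ1 + X) (Δ1 + Y) → SQ Ax (Γ + X) (Δ + Y))
    (h1 : PP Ax (pre ++ (Γ1, Δ1) :: post, ep)) :
    PP Ax (pre ++ (Γ, Δ) :: post, ep) :=
  PP_two (fun X Y a _ => h X Y a) h1 h1

theorem QQ_last {Ax X Y} {pre : List Cmp} {Γ Δ} :
    QQ Ax X Y (pre ++ [(Γ, Δ)]) ↔ (∃ d ∈ pre, SQ Ax d.1 d.2) ∨ SQ Ax (Γ + X) (Δ + Y) := by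
  rw [QQ_app]; simp [QQ]

theorem QQ_last2 {Ax} {pre : List Cmp} {Γ Δ Γ' Δ'} :
    QQ Ax 0 0 (pre ++ [(Γ, Δ), (Γ', Δ')]) ↔
      (∃ d ∈ pre, SQ Ax d.1 d.2) ∨ SQ Ax Γ Δ ∨ SQ Ax Γ' Δ' := by
  rw [QQ_app]; simp [QQ]

theorem ED_PP {Ax s} (h : ED Ax true false s) : PP Ax s := by
  induction h with
  | init => exact PP_zero fun X Y => by simp only [Multiset.cons_add]; exact .init
  | botL => exact PP_zero fun X Y => by simp only [Multiset.cons_add]; exact .botL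
  | topR => exact PP_zero fun X Y => by simp only [Multiset.cons_add]; exact .topR
  | negL _ i => exact PP_one (fun X Y => by simp only [Multiset.cons_add]; exact .negL) i
  | negR _ i => exact PP_one (fun X Y => by simp only [Multiset.cons_add]; exact .negR) i
  | andL _ i => exact PP_one (fun X Y => by simp only [Multiset.cons_add]; exact .andL) i
  | andR _ _ i j => exact PP_two (fun X Y => by simp only [Multiset.cons_add]; exact .andR) i j
  | orL _ _ i j => exact PP_two (fun X Y => by simp only [Multiset.cons_add]; exact .orL) i j
  | orR _ i => exact PP_one (fun X Y => by simp only [Multiset.cons_add]; exact .orR) i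
  | impL _ _ i j => exact PP_two (fun X Y => by simp only [Multiset.cons_add]; exact .impL) i j
  | impR _ i => exact PP_one (fun X Y => by simp only [Multiset.cons_add]; exact .impR) i
  | conL _ _ i => exact PP_one (fun X Y => by simp only [Multiset.cons_add]; exact .conL) i
  | conR _ _ i => exact PP_one (fun X Y => by simp only [Multiset.cons_add]; exact .conR) i
  | wkL h => simp at h
  | wkR h => simp at h
  | @boxRe G Γ Δ B _ i =>
    have := i 0 B 0 (by simp) (by simp) (by simp) (by simp)
    rw [QQ_last] at this
    refine QQ_last.2 (this.imp_right fun h => ?_)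
    simpa [add_comm _ ({_} : Multiset Fm)] using h
  | @boxLe G Γ Δ Sg Pp Om Th A _ _ i j =>
    intro As B n hp hm hc hA
    simp only [Prod.mk.injEq] at hp
    obtain ⟨⟨rfl, rfl⟩, rfl, rfl⟩ := hp
    rw [QQ_last]
    have w : SQ Ax Γ Δ → SQ Ax (Fm.box A ::ₘ Γ + Multiset.map Fm.box Sg) (Δ + {Fm.box B}) := by
      intro h
      have := h.weak (Fm.box A ::ₘ Multiset.map Fm.box Sg) {Fm.box B}
      simpa using this
    rcases QQ_last2.1 i with i | i | i
    · exact .inl i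
    · exact .inr (w i)
    rcases QQ_last2.1 j with j | j | j
    · exact .inl j
    · exact .inr (w j)
    right
    have := SQ.modal (Γ := Γ) (Δ := Δ) hm hc i j hA
    simpa [add_comm _ ({_} : Multiset Fm), add_comm Γ] using this
  | @ruleN G Γ Δ B hn _ i =>
    refine QQ_last.2 ?_
    rcases QQ_last2.1 i with i | i | i
    · exact .inl i
    · right
      have := i.weak 0 {Fm.box B}
      simpa [add_comm _ ({_} : Multiset Fm)] using this
    · right
      simpa using SQ.ruleN hn i
  | ruleM hm _ i =>
    intro As B n hp _ hc hA
    simp only [Prod.mk.injEq] at hp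
    obtain ⟨⟨rfl, rfl⟩, rfl, rfl⟩ := hp
    refine i _ B (n + 1) (by simp [Multiset.replicate_succ]) (.inr hm) hc ?_
    intro C hC
    have := (hA C hC).weak {Fm.bot} 0
    simpa [Multiset.replicate_succ, add_comm _ ({Fm.bot} : Multiset Fm)] using this
  | @ruleC G Γ Δ Sg Pp Om Th A hC _ _ i j =>
    intro As B n hp hm hc hA
    simp only [Prod.mk.injEq] at hp
    obtain ⟨⟨rfl, rfl⟩, rfl, rfl⟩ := hp
    rw [QQ_last]
    rcases QQ_last2.1 j with j | j | j
    · exact .inl j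
    · right
      have := j.weak (Fm.box A ::ₘ Multiset.map Fm.box Sg) {Fm.box B}
      simpa using this
    have := i (A ::ₘ Sg) B n rfl hm (.inr hC) (by
      intro C hC
      rcases Multiset.mem_cons.1 hC with rfl | hC
      · exact j
      · exact hA C hC)
    rw [QQ_last] at this
    simpa using this

/-- If a linear nested sequent `Γ ⇒ Δ` consisting of a single component is
derivable in `LNS_E𝒜Con`, then it is derivable in the end-active variant of
`LNS_E𝒜Con` (for every `𝒜 ⊆ {M, C, N}`). -/
theorem LNSeCon_to_endActive (Ax : EAx) (Γ Δ : Multiset Fm)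
    (h : ED Ax true false ([(Γ, Δ)], none)) :
    EDe Ax true false ([(Γ, Δ)], none) := by
  have h1 : QQ Ax 0 0 [(Γ, Δ)] := ED_PP h
  have h2 : SQ Ax Γ Δ := by simpa [QQ] using h1
  exact h2.toEDe []
end

section
/- For every 𝒜 ⊆ {M, C, N}: if a sequent Γ ⇒ Δ is derivable in LNS_E𝒜Con, then it is derivable in the corresponding sequent calculus G_E𝒜Con. Consequently, if ⇒ A is derivable in LNS_E𝒜ConW then A ∈ E𝒜 (soundness). -/
/-- The sequent calculus `G_E𝒜Con` for the non-normal modal logic `E𝒜`: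
the classical propositional sequent calculus with explicit contraction rules,
together with the modal rules `(E)` (for `G_E`, `G_EN`), `(En)` (for `G_EC`,
`G_ECN`), `(M)` (for `G_M`, `G_MN`), `(Mn)` (for `G_MC`, `G_MCN`) and `(N)`
(when `N ∈ 𝒜`). -/
inductive GE (Ax : EAx) : Multiset Fm → Multiset Fm → Prop
  | init {Γ Δ : Multiset Fm} {m : ℕ} : GE Ax (Fm.var m ::ₘ Γ) (Fm.var m ::ₘ Δ)
  | botL {Γ Δ} : GE Ax (Fm.bot ::ₘ Γ) Δ
  | topR {Γ Δ} : GE Ax Γ (Fm.top ::ₘ Δ)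
  | negL {Γ Δ A} : GE Ax Γ (A ::ₘ Δ) → GE Ax (Fm.neg A ::ₘ Γ) Δ
  | negR {Γ Δ A} : GE Ax (A ::ₘ Γ) Δ → GE Ax Γ (Fm.neg A ::ₘ Δ)
  | andL {Γ Δ A B} : GE Ax (A ::ₘ B ::ₘ Γ) Δ → GE Ax (Fm.and A B ::ₘ Γ) Δ
  | andR {Γ Δ A B} : GE Ax Γ (A ::ₘ Δ) → GE Ax Γ (B ::ₘ Δ) → GE Ax Γ (Fm.and A B ::ₘ Δ)
  | orL {Γ Δ A B} : GE Ax (A ::ₘ Γ) Δ → GE Ax (B ::ₘ Γ) Δ → GE Ax (Fm.or A B ::ₘ Γ) Δ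
  | orR {Γ Δ A B} : GE Ax Γ (A ::ₘ B ::ₘ Δ) → GE Ax Γ (Fm.or A B ::ₘ Δ)
  | impL {Γ Δ A B} : GE Ax (B ::ₘ Γ) Δ → GE Ax Γ (A ::ₘ Δ) → GE Ax (Fm.imp A B ::ₘ Γ) Δ
  | impR {Γ Δ A B} : GE Ax (A ::ₘ Γ) (B ::ₘ Δ) → GE Ax Γ (Fm.imp A B ::ₘ Δ)
  | conL {Γ Δ A} : GE Ax (A ::ₘ A ::ₘ Γ) Δ → GE Ax (A ::ₘ Γ) Δ
  | conR {Γ Δ A} : GE Ax Γ (A ::ₘ A ::ₘ Δ) → GE Ax Γ (A ::ₘ Δ)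
  | ruleE {Γ Δ A B} : Ax.m = false → Ax.c = false →
      GE Ax {A} {B} → GE Ax {B} {A} →
      GE Ax (Fm.box A ::ₘ Γ) (Fm.box B ::ₘ Δ)
  | ruleEn {Γ Δ B} {l : List Fm} : Ax.m = false → Ax.c = true → l ≠ [] →
      GE Ax (↑l) {B} → (∀ A ∈ l, GE Ax {B} {A}) →
      GE Ax ((↑(l.map Fm.box) : Multiset Fm) + Γ) (Fm.box B ::ₘ Δ)
  | ruleM {Γ Δ A B} : Ax.m = true → Ax.c = false →
      GE Ax {A} {B} →
      GE Ax (Fm.box A ::ₘ Γ) (Fm.box B ::ₘ Δ)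
  | ruleMn {Γ Δ B} {l : List Fm} : Ax.m = true → Ax.c = true →
      (l ≠ [] ∨ Ax.n = true) →
      GE Ax (↑l) {B} →
      GE Ax ((↑(l.map Fm.box) : Multiset Fm) + Γ) (Fm.box B ::ₘ Δ)
  | ruleN {Γ Δ A} : Ax.n = true →
      GE Ax 0 {A} → GE Ax Γ (Fm.box A ::ₘ Δ)

theorem GE.weak {Ax : EAx} {Γ Δ : Multiset Fm} (h : GE Ax Γ Δ) :
    ∀ Γ' Δ' : Multiset Fm, GE Ax (Γ + Γ') (Δ + Δ') := by
  induction h with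
  | init => intro Γ' Δ'; simp only [Multiset.cons_add]; exact .init
  | botL => intro Γ' Δ'; simp only [Multiset.cons_add]; exact .botL
  | topR => intro Γ' Δ'; simp only [Multiset.cons_add]; exact .topR
  | negL _ ih => intro Γ' Δ'; simp only [Multiset.cons_add] at *; exact .negL (ih _ _)
  | negR _ ih => intro Γ' Δ'; simp only [Multiset.cons_add] at *; exact .negR (ih _ _)
  | andL _ ih => intro Γ' Δ'; simp only [Multiset.cons_add] at *; exact .andL (ih _ _)
  | andR _ _ ih ih2 =>
    intro Γ' Δ'; simp only [Multiset.cons_add] at *; exact .andR (ih _ _) (ih2 _ _)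
  | orL _ _ ih ih2 =>
    intro Γ' Δ'; simp only [Multiset.cons_add] at *; exact .orL (ih _ _) (ih2 _ _)
  | orR _ ih => intro Γ' Δ'; simp only [Multiset.cons_add] at *; exact .orR (ih _ _)
  | impL _ _ ih ih2 =>
    intro Γ' Δ'; simp only [Multiset.cons_add] at *; exact .impL (ih _ _) (ih2 _ _)
  | impR _ ih => intro Γ' Δ'; simp only [Multiset.cons_add] at *; exact .impR (ih _ _)
  | conL _ ih => intro Γ' Δ'; simp only [Multiset.cons_add] at *; exact .conL (ih _ _)
  | conR _ ih => intro Γ' Δ'; simp only [Multiset.cons_add] at *; exact .conR (ih _ _)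
  | ruleE hm hc h1 h2 => intro Γ' Δ'; simp only [Multiset.cons_add]; exact .ruleE hm hc h1 h2
  | ruleEn hm hc hl h1 h2 =>
    intro Γ' Δ'; simp only [Multiset.cons_add, add_assoc]; exact .ruleEn hm hc hl h1 h2
  | ruleM hm hc h1 => intro Γ' Δ'; simp only [Multiset.cons_add]; exact .ruleM hm hc h1
  | ruleMn hm hc hl h1 =>
    intro Γ' Δ'; simp only [Multiset.cons_add, add_assoc]; exact .ruleMn hm hc hl h1
  | ruleN hn h1 => intro Γ' Δ'; simp only [Multiset.cons_add]; exact .ruleN hn h1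

theorem GE.weakL {Ax : EAx} {Γ Δ : Multiset Fm} (A : Fm) (h : GE Ax Γ Δ) :
    GE Ax (A ::ₘ Γ) Δ := by
  have := h.weak {A} 0
  rwa [add_zero, add_comm, Multiset.singleton_add] at this

theorem GE.weakR {Ax : EAx} {Γ Δ : Multiset Fm} (A : Fm) (h : GE Ax Γ Δ) :
    GE Ax Γ (A ::ₘ Δ) := by
  have := h.weak 0 {A}
  rwa [add_zero, add_comm, Multiset.singleton_add] at this

/-- Some component is derivable, after adding `X1 ⇒ X2` to the last one. -/
def LInv (Ax : EAx) (X1 X2 : Multiset Fm) : List Cmp → Prop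
  | [] => False
  | [c] => GE Ax (c.1 + X1) (c.2 + X2)
  | c :: d :: l => GE Ax c.1 c.2 ∨ LInv Ax X1 X2 (d :: l)

theorem inv_key (Ax : EAx) (X1 X2 : Multiset Fm) (pre post : List Cmp) :
    ∃ (R : Prop) (Y1 Y2 : Multiset Fm), ∀ Γ Δ,
      LInv Ax X1 X2 (pre ++ (Γ, Δ) :: post) ↔ R ∨ GE Ax (Γ + Y1) (Δ + Y2) := by
  induction pre with
  | nil =>
    cases post with
    | nil => exact ⟨False, X1, X2, fun Γ Δ => by simp [LInv]⟩
    | cons d l => exact ⟨LInv Ax X1 X2 (d :: l), 0, 0, fun Γ Δ => by simp [LInv, or_comm]⟩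
  | cons c pre ih =>
    obtain ⟨R, Y1, Y2, H⟩ := ih
    refine ⟨GE Ax c.1 c.2 ∨ R, Y1, Y2, fun Γ Δ => ?_⟩
    rw [or_assoc, ← H]
    cases pre <;> simp [LInv]

theorem inv_last (Ax : EAx) (G : List Cmp) :
    ∃ R : Prop, ∀ X1 X2 Γ Δ,
      (LInv Ax X1 X2 (G ++ [(Γ, Δ)]) ↔ R ∨ GE Ax (Γ + X1) (Δ + X2)) ∧
      ∀ Γ' Δ', (LInv Ax X1 X2 (G ++ [(Γ, Δ), (Γ', Δ')]) ↔
        R ∨ GE Ax Γ Δ ∨ GE Ax (Γ' + X1) (Δ' + X2)) := by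
  induction G with
  | nil => exact ⟨False, fun X1 X2 Γ Δ => by simp [LInv]⟩
  | cons c G ih =>
    obtain ⟨R, H⟩ := ih
    refine ⟨GE Ax c.1 c.2 ∨ R, fun X1 X2 Γ Δ => ⟨?_, fun Γ' Δ' => ?_⟩⟩
    · rw [or_assoc, ← (H X1 X2 Γ Δ).1]
      cases G <;> simp [LInv]
    · rw [or_assoc, ← (H X1 X2 Γ Δ).2]
      cases G <;> simp [LInv]

def Adm (Ax : EAx) : Option (Cmp × Cmp) → Multiset Fm → Multiset Fm → Prop
  | none, X1, X2 => X1 = 0 ∧ X2 = 0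
  | some ((Sg, Pp), (Om, Th)), X1, X2 => ∃ B : Fm, Pp = {B} ∧
      (Ax.m = true ∨ (Om = {B} ∧ Th = 0 ∧ ∀ A ∈ Sg, GE Ax {B} {A})) ∧
      (Sg = 0 ∨ Ax.c = true) ∧ X1 = Sg.map Fm.box ∧ X2 = {Fm.box B}

theorem GE.modal {Ax : EAx} {Γ Δ Sg : Multiset Fm} {A B : Fm}
    (h1 : GE Ax (A ::ₘ Sg) {B})
    (h2 : Ax.m = true ∨ (GE Ax {B} {A} ∧ ∀ A ∈ Sg, GE Ax {B} {A}))
    (h3 : Sg = 0 ∨ Ax.c = true) :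
    GE Ax (Fm.box A ::ₘ Γ + Sg.map Fm.box) (Δ + {Fm.box B}) := by
  have e2 : Δ + {Fm.box B} = Fm.box B ::ₘ Δ := by
    rw [add_comm, Multiset.singleton_add]
  rw [e2]
  cases hc : Ax.c with
  | true =>
    obtain ⟨l, rfl⟩ := Quot.exists_rep Sg
    have e1 : Fm.box A ::ₘ Γ + Multiset.map Fm.box (Quot.mk _ l)
        = (↑((A :: l).map Fm.box) : Multiset Fm) + Γ := by
      rw [add_comm, List.map_cons, ← Multiset.cons_coe, Multiset.cons_add, Multiset.add_cons]; rfl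
    rw [e1]
    cases hm : Ax.m with
    | true => exact .ruleMn hm hc (Or.inl (by simp)) h1
    | false =>
      rcases h2 with h2 | ⟨h2, h4⟩
      · simp [hm] at h2
      · refine .ruleEn hm hc (by simp) h1 ?_
        intro C hC
        rcases List.mem_cons.1 hC with rfl | hC
        · exact h2
        · exact h4 C hC
  | false =>
    have h0 : Sg = 0 := by simpa [hc] using h3
    subst h0
    simp only [Multiset.map_zero, add_zero]
    cases hm : Ax.m with
    | true => exact .ruleM hm hc h1
    | false =>
      rcases h2 with h2 | ⟨h2, _⟩
      · simp [hm] at h2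
      · exact .ruleE hm hc h1 h2

theorem ED.good {Ax : EAx} {con wk : Bool} {s : LNSe} (h : ED Ax con wk s) :
    ∀ X1 X2, Adm Ax s.2 X1 X2 → LInv Ax X1 X2 s.1 := by
  induction h with
  | @init pre post _ _ _ _ =>
    intro X1 X2 _
    obtain ⟨R, Y1, Y2, H⟩ := inv_key Ax X1 X2 pre post
    dsimp only
    rw [H]
    simp only [Multiset.cons_add]
    exact Or.inr .init
  | @botL pre post _ _ _ =>
    intro X1 X2 _
    obtain ⟨R, Y1, Y2, H⟩ := inv_key Ax X1 X2 pre post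
    dsimp only
    rw [H]
    simp only [Multiset.cons_add]
    exact Or.inr .botL
  | @topR pre post _ _ _ =>
    intro X1 X2 _
    obtain ⟨R, Y1, Y2, H⟩ := inv_key Ax X1 X2 pre post
    dsimp only
    rw [H]
    simp only [Multiset.cons_add]
    exact Or.inr .topR
  | @negL pre post _ _ _ _ _ ih =>
    intro X1 X2 hX
    obtain ⟨R, Y1, Y2, H⟩ := inv_key Ax X1 X2 pre post
    have i := ih X1 X2 hX
    dsimp only at i ⊢
    rw [H] at i ⊢
    simp only [Multiset.cons_add] at i ⊢
    rcases i with i | i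
    · exact Or.inl i
    exact Or.inr (.negL i)
  | @negR pre post _ _ _ _ _ ih =>
    intro X1 X2 hX
    obtain ⟨R, Y1, Y2, H⟩ := inv_key Ax X1 X2 pre post
    have i := ih X1 X2 hX
    dsimp only at i ⊢
    rw [H] at i ⊢
    simp only [Multiset.cons_add] at i ⊢
    rcases i with i | i
    · exact Or.inl i
    exact Or.inr (.negR i)
  | @andL pre post _ _ _ _ _ _ ih =>
    intro X1 X2 hX
    obtain ⟨R, Y1, Y2, H⟩ := inv_key Ax X1 X2 pre post
    have i := ih X1 X2 hX
    dsimp only at i ⊢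
    rw [H] at i ⊢
    simp only [Multiset.cons_add] at i ⊢
    rcases i with i | i
    · exact Or.inl i
    exact Or.inr (.andL i)
  | @andR pre post _ _ _ _ _ _ _ ih ih2 =>
    intro X1 X2 hX
    obtain ⟨R, Y1, Y2, H⟩ := inv_key Ax X1 X2 pre post
    have i := ih X1 X2 hX
    have j := ih2 X1 X2 hX
    dsimp only at i j ⊢
    rw [H] at i j ⊢
    simp only [Multiset.cons_add] at i j ⊢
    rcases i with i | i
    · exact Or.inl i
    rcases j with j | j
    · exact Or.inl j
    exact Or.inr (.andR i j)
  | @orL pre post _ _ _ _ _ _ _ ih ih2 =>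
    intro X1 X2 hX
    obtain ⟨R, Y1, Y2, H⟩ := inv_key Ax X1 X2 pre post
    have i := ih X1 X2 hX
    have j := ih2 X1 X2 hX
    dsimp only at i j ⊢
    rw [H] at i j ⊢
    simp only [Multiset.cons_add] at i j ⊢
    rcases i with i | i
    · exact Or.inl i
    rcases j with j | j
    · exact Or.inl j
    exact Or.inr (.orL i j)
  | @orR pre post _ _ _ _ _ _ ih =>
    intro X1 X2 hX
    obtain ⟨R, Y1, Y2, H⟩ := inv_key Ax X1 X2 pre post
    have i := ih X1 X2 hX
    dsimp only at i ⊢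
    rw [H] at i ⊢
    simp only [Multiset.cons_add] at i ⊢
    rcases i with i | i
    · exact Or.inl i
    exact Or.inr (.orR i)
  | @impL pre post _ _ _ _ _ _ _ ih ih2 =>
    intro X1 X2 hX
    obtain ⟨R, Y1, Y2, H⟩ := inv_key Ax X1 X2 pre post
    have i := ih X1 X2 hX
    have j := ih2 X1 X2 hX
    dsimp only at i j ⊢
    rw [H] at i j ⊢
    simp only [Multiset.cons_add] at i j ⊢
    rcases i with i | i
    · exact Or.inl i
    rcases j with j | j
    · exact Or.inl j
    exact Or.inr (.impL i j)
  | @impR pre post _ _ _ _ _ _ ih =>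
    intro X1 X2 hX
    obtain ⟨R, Y1, Y2, H⟩ := inv_key Ax X1 X2 pre post
    have i := ih X1 X2 hX
    dsimp only at i ⊢
    rw [H] at i ⊢
    simp only [Multiset.cons_add] at i ⊢
    rcases i with i | i
    · exact Or.inl i
    exact Or.inr (.impR i)
  | @conL pre post _ _ _ _ _ _ ih =>
    intro X1 X2 hX
    obtain ⟨R, Y1, Y2, H⟩ := inv_key Ax X1 X2 pre post
    have i := ih X1 X2 hX
    dsimp only at i ⊢
    rw [H] at i ⊢
    simp only [Multiset.cons_add] at i ⊢
    rcases i with i | i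
    · exact Or.inl i
    exact Or.inr (.conL i)
  | @conR pre post _ _ _ _ _ _ ih =>
    intro X1 X2 hX
    obtain ⟨R, Y1, Y2, H⟩ := inv_key Ax X1 X2 pre post
    have i := ih X1 X2 hX
    dsimp only at i ⊢
    rw [H] at i ⊢
    simp only [Multiset.cons_add] at i ⊢
    rcases i with i | i
    · exact Or.inl i
    exact Or.inr (.conR i)
  | @wkL pre post _ _ _ _ _ _ ih =>
    intro X1 X2 hX
    obtain ⟨R, Y1, Y2, H⟩ := inv_key Ax X1 X2 pre post
    have i := ih X1 X2 hX
    dsimp only at i ⊢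
    rw [H] at i ⊢
    simp only [Multiset.cons_add] at i ⊢
    rcases i with i | i
    · exact Or.inl i
    exact Or.inr (GE.weakL _ i)
  | @wkR pre post _ _ _ _ _ _ ih =>
    intro X1 X2 hX
    obtain ⟨R, Y1, Y2, H⟩ := inv_key Ax X1 X2 pre post
    have i := ih X1 X2 hX
    dsimp only at i ⊢
    rw [H] at i ⊢
    simp only [Multiset.cons_add] at i ⊢
    rcases i with i | i
    · exact Or.inl i
    exact Or.inr (GE.weakR _ i)
  | @boxRe G Γ Δ B _ ih =>
    rintro X1 X2 ⟨rfl, rfl⟩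
    have := ih 0 {Fm.box B} ⟨B, rfl, Or.inr ⟨rfl, rfl, by simp⟩, Or.inl rfl, rfl, rfl⟩
    obtain ⟨R, H⟩ := inv_last Ax G
    dsimp only at this ⊢
    rw [(H _ _ _ _).1] at this ⊢
    rwa [add_zero, ← Multiset.singleton_add, add_comm {Fm.box B}, add_zero] at *
  | @boxLe G Γ Δ Sg Pp Om Th A _ _ ih1 ih2 =>
    rintro X1 X2 ⟨B, rfl, h1, h2, rfl, rfl⟩
    have i1 := ih1 0 0 ⟨rfl, rfl⟩
    have i2 := ih2 0 0 ⟨rfl, rfl⟩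
    obtain ⟨R, H⟩ := inv_last Ax G
    dsimp only at i1 i2 ⊢
    rw [(H _ _ _ _).2] at i1 i2
    rw [(H _ _ _ _).1]
    simp only [add_zero] at i1 i2
    rcases i1 with i1 | i1 | i1
    · exact Or.inl i1
    · exact Or.inr ((i1.weakL _).weak _ _)
    rcases i2 with i2 | i2 | i2
    · exact Or.inl i2
    · exact Or.inr ((i2.weakL _).weak _ _)
    refine Or.inr (GE.modal i1 (h1.imp id ?_) h2)
    rintro ⟨rfl, rfl, h⟩
    exact ⟨i2, h⟩
  | @ruleN G Γ Δ B hn _ ih =>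
    rintro X1 X2 ⟨rfl, rfl⟩
    have i1 := ih 0 0 ⟨rfl, rfl⟩
    obtain ⟨R, H⟩ := inv_last Ax G
    dsimp only at i1 ⊢
    rw [(H _ _ _ _).2] at i1
    rw [(H _ _ _ _).1]
    simp only [add_zero] at i1 ⊢
    rcases i1 with i1 | i1 | i1
    · exact Or.inl i1
    · exact Or.inr (i1.weakR _)
    · exact Or.inr (.ruleN hn i1)
  | ruleM hm _ ih =>
    rintro X1 X2 ⟨B, rfl, h1, h2, rfl, rfl⟩
    exact ih _ _ ⟨B, rfl, Or.inl hm, h2, rfl, rfl⟩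
  | @ruleC G Γ Δ Sg Pp Om Th A hc _ _ ih1 ih2 =>
    rintro X1 X2 ⟨B, rfl, h1, h2, rfl, rfl⟩
    have i2 := ih2 0 0 ⟨rfl, rfl⟩
    obtain ⟨R, H⟩ := inv_last Ax G
    dsimp only at i2 ⊢
    rw [(H _ _ _ _).2] at i2
    rw [(H _ _ _ _).1]
    simp only [add_zero] at i2
    rcases i2 with i2 | i2 | i2
    · exact Or.inl i2
    · exact Or.inr ((i2.weakL _).weak _ _)
    have i1 := ih1 ((A ::ₘ Sg).map Fm.box) {Fm.box B} ⟨B, rfl, h1.imp id (by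
      rintro ⟨rfl, rfl, h⟩
      refine ⟨rfl, rfl, ?_⟩
      intro C hC
      rcases Multiset.mem_cons.1 hC with rfl | hC
      · exact i2
      · exact h C hC), Or.inr hc, rfl, rfl⟩
    dsimp only at i1
    rw [(H _ _ _ _).1] at i1
    simpa using i1

/-- `P` holds at all valuations satisfying some finite set of theorems. -/
def Cons (Ax : EAx) (P : (Fm → Prop) → Prop) : Prop :=
  ∃ L : List Fm, (∀ A ∈ L, EThm Ax A) ∧ ∀ v, (∀ A ∈ L, evalP v A) → P v

theorem Cons.mono {Ax : EAx} {P Q : (Fm → Prop) → Prop} (h : Cons Ax P)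
    (hPQ : ∀ v, P v → Q v) : Cons Ax Q := by
  obtain ⟨L, h1, h2⟩ := h
  exact ⟨L, h1, fun v hv => hPQ v (h2 v hv)⟩

theorem Cons.mono2 {Ax : EAx} {P P' Q : (Fm → Prop) → Prop} (h : Cons Ax P) (h' : Cons Ax P')
    (hPQ : ∀ v, P v → P' v → Q v) : Cons Ax Q := by
  obtain ⟨L, h1, h2⟩ := h
  obtain ⟨L', h1', h2'⟩ := h'
  refine ⟨L ++ L', ?_, fun v hv => hPQ v (h2 v fun A hA => hv A ?_) (h2' v fun A hA => hv A ?_)⟩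
  · intro A hA
    rcases List.mem_append.1 hA with hA | hA
    · exact h1 A hA
    · exact h1' A hA
  · exact List.mem_append_left _ hA
  · exact List.mem_append_right _ hA

theorem Cons.triv {Ax : EAx} {P : (Fm → Prop) → Prop} (h : ∀ v, P v) : Cons Ax P :=
  ⟨[], by simp, fun v _ => h v⟩

theorem Cons.of {Ax : EAx} {A : Fm} (h : EThm Ax A) : Cons Ax (fun v => evalP v A) :=
  ⟨[A], by simpa using h, fun v hv => hv A (by simp)⟩

theorem Cons.thm {Ax : EAx} {A : Fm} (h : Cons Ax (fun v => evalP v A)) : EThm Ax A := by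
  obtain ⟨L, h1, h2⟩ := h
  induction L generalizing A with
  | nil => exact .taut fun v => h2 v (by simp)
  | cons C L ih =>
    refine .mp (A := C) (ih (fun A hA => h1 A (by simp [hA])) ?_) (h1 C (by simp))
    intro v hv hC
    refine h2 v fun D hD => ?_
    rcases List.mem_cons.1 hD with rfl | hD
    · exact hC
    · exact hv D hD

def Sat (Γ Δ : Multiset Fm) (v : Fm → Prop) : Prop :=
  (∀ A ∈ Γ, evalP v A) → ∃ B ∈ Δ, evalP v B

def conj : Fm → List Fm → Fm
  | A, [] => A
  | A, B :: l => .and A (conj B l)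

theorem eval_conj (v : Fm → Prop) (A : Fm) (l : List Fm) :
    evalP v (conj A l) ↔ ∀ C ∈ A :: l, evalP v C := by
  induction l generalizing A with
  | nil => simp [conj]
  | cons B l ih => simp [conj, evalP, ih]

theorem box_conj {Ax : EAx} (hc : Ax.c = true) (A : Fm) (l : List Fm) :
    Cons Ax (fun v => (∀ C ∈ A :: l, evalP v (.box C)) → evalP v (.box (conj A l))) := by
  induction l generalizing A with
  | nil => exact .triv fun v h => h A (by simp)
  | cons B l ih =>
    refine (ih B).mono2 (Cons.of (.axC (A := A) (B := conj B l) hc)) fun v h1 h2 h3 => ?_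
    refine h2 ⟨h3 A (by simp), h1 fun C hC => h3 C (by simp [List.mem_cons.1 hC])⟩

theorem box_cong {Ax : EAx} {A B : Fm} (h1 : Cons Ax (fun v => evalP v A → evalP v B))
    (h2 : Cons Ax (fun v => evalP v B → evalP v A)) :
    Cons Ax (fun v => evalP v (.box A) → evalP v (.box B)) :=
  Cons.of (.cong (Cons.thm (A := .imp A B) h1) (Cons.thm (A := .imp B A) h2))

theorem box_mono {Ax : EAx} (hm : Ax.m = true) {A B : Fm}
    (h1 : Cons Ax (fun v => evalP v A → evalP v B)) :
    Cons Ax (fun v => evalP v (.box A) → evalP v (.box B)) := by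
  have h2 := box_cong (A := A) (B := .and A B) (h1.mono fun v h hA => ⟨hA, h hA⟩)
    (.triv fun v h => h.1)
  exact h2.mono2 (Cons.of (.axM (A := A) (B := B) hm)) fun v h3 h4 h5 => (h4 (h3 h5)).2

theorem box_nec {Ax : EAx} (hn : Ax.n = true) {A : Fm}
    (h1 : Cons Ax (fun v => evalP v A)) : Cons Ax (fun v => evalP v (.box A)) :=
  (box_cong (A := .top) (B := A) (h1.mono fun v h _ => h) (.triv fun v _ => trivial)).mono2
    (Cons.of (.axN hn)) fun v h3 h4 => h3 h4

theorem GE.sound {Ax : EAx} {Γ Δ : Multiset Fm} (h : GE Ax Γ Δ) : Cons Ax (Sat Γ Δ) := by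
  induction h with
  | init => exact .triv fun v => by simp [Sat]; tauto
  | botL => exact .triv fun v => by simp [Sat, evalP]
  | topR => exact .triv fun v => by simp [Sat, evalP]
  | negL _ ih => exact ih.mono fun v => by simp [Sat, evalP]; tauto
  | negR _ ih => exact ih.mono fun v => by simp [Sat, evalP]; tauto
  | andL _ ih => exact ih.mono fun v => by simp [Sat, evalP]
  | andR _ _ ih ih2 => exact ih.mono2 ih2 fun v => by simp [Sat, evalP]; tauto
  | orL _ _ ih ih2 => exact ih.mono2 ih2 fun v => by simp [Sat, evalP]; tauto
  | orR _ ih => exact ih.mono fun v => by simp [Sat, evalP]; tauto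
  | impL _ _ ih ih2 => exact ih.mono2 ih2 fun v => by simp [Sat, evalP]; tauto
  | impR _ ih => exact ih.mono fun v => by simp [Sat, evalP]; tauto
  | conL _ ih => exact ih.mono fun v => by simp [Sat]
  | conR _ ih => exact ih.mono fun v => by simp [Sat]
  | ruleE _ _ _ _ ih1 ih2 =>
    exact (box_cong (ih1.mono fun v => by simp [Sat]) (ih2.mono fun v => by simp [Sat])).mono
      fun v h h2 => ⟨_, Multiset.mem_cons_self _ _, h (h2 _ (Multiset.mem_cons_self _ _))⟩
  | ruleM hm _ _ ih1 =>
    exact (box_mono hm (ih1.mono fun v => by simp [Sat])).mono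
      fun v h h2 => ⟨_, Multiset.mem_cons_self _ _, h (h2 _ (Multiset.mem_cons_self _ _))⟩
  | ruleN hn _ ih1 =>
    exact (box_nec hn (ih1.mono fun v => by simp [Sat])).mono
      fun v h h2 => ⟨_, Multiset.mem_cons_self _ _, h⟩
  | @ruleEn Γ Δ B l _ hc hl _ _ ih1 ih2 =>
    cases l with
    | nil => exact absurd rfl hl
    | cons A l =>
      have k1 : Cons Ax (fun v => evalP v (conj A l) → evalP v B) :=
        ih1.mono fun v h => by rw [eval_conj]; simpa [Sat] using h
      have k2 : Cons Ax (fun v => evalP v B → evalP v (conj A l)) := by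
        simp only [eval_conj]
        clear k1 ih1 hl
        rename_i h1 h2
        clear h1 h2
        generalize A :: l = l' at *
        induction l' with
        | nil => exact .triv fun v => by simp
        | cons C l' ih =>
          refine (ih2 C (by simp)).mono2 (ih fun D hD => ih2 D (by simp [hD])) fun v => ?_
          simp [Sat]; tauto
      refine (box_cong k1 k2).mono2 (box_conj hc A l) fun v h1 h2 h3 => ?_
      refine ⟨_, Multiset.mem_cons_self _ _, h1 (h2 fun C hC => h3 _ ?_)⟩
      exact Multiset.mem_add.2 (Or.inl (List.mem_map_of_mem hC))
  | @ruleMn Γ Δ B l hm hc hl _ ih1 =>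
    cases l with
    | nil =>
      have hn : Ax.n = true := by simpa using hl
      exact (box_nec hn (ih1.mono fun v => by simp [Sat])).mono
        fun v h h2 => ⟨_, Multiset.mem_cons_self _ _, h⟩
    | cons A l =>
      have k1 : Cons Ax (fun v => evalP v (conj A l) → evalP v B) :=
        ih1.mono fun v h => by rw [eval_conj]; simpa [Sat] using h
      refine (box_mono hm k1).mono2 (box_conj hc A l) fun v h1 h2 h3 => ?_
      refine ⟨_, Multiset.mem_cons_self _ _, h1 (h2 fun C hC => h3 _ ?_)⟩
      exact Multiset.mem_add.2 (Or.inl (List.mem_map_of_mem hC))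

/-- Soundness of the linear nested sequent calculi for non-normal modal
logics:  every single-component linear nested sequent derivable in
`LNS_E𝒜Con` is derivable in the sequent calculus `G_E𝒜Con`; consequently, if
`⇒ A` is derivable in `LNS_E𝒜ConW` then `A ∈ E𝒜`. -/
theorem LNSe_sound (Ax : EAx) :
    (∀ Γ Δ : Multiset Fm, ED Ax true false ([(Γ, Δ)], none) → GE Ax Γ Δ) ∧
    (∀ A : Fm, ED Ax true true ([(0, {A})], none) → EThm Ax A) := by
  have key : ∀ (wk : Bool) (Γ Δ : Multiset Fm), ED Ax true wk ([(Γ, Δ)], none) → GE Ax Γ Δ := by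
    intro wk Γ Δ h
    simpa [LInv] using h.good 0 0 ⟨rfl, rfl⟩
  refine ⟨key false, fun A h => ?_⟩
  exact Cons.thm ((key true _ _ h).sound.mono fun v => by simp [Sat])
end

section
/- For every 𝒜 ⊆ {M, C, N}, contraction is admissible in the calculus LNS_E𝒜: if S{Γ, A, A ⇒ Δ} (respectively S{Γ ⇒ Δ, A, A}) is derivable in LNS_E𝒜, then S{Γ, A ⇒ Δ} (respectively S{Γ ⇒ Δ, A}) is derivable in LNS_E𝒜. -/
namespace EDSem

/-- Polarised evaluation: `true` = left, `false` = right. -/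
def ev (X Y : Set Fm) : Bool → Fm → Prop
  | true, .var n => Fm.var n ∈ X
  | false, .var n => Fm.var n ∈ Y
  | true, .bot => False
  | false, .bot => True
  | true, .top => True
  | false, .top => False
  | true, .neg A => ev X Y false A
  | false, .neg A => ev X Y true A
  | true, .and A B => ev X Y true A ∧ ev X Y true B
  | false, .and A B => ev X Y false A ∨ ev X Y false B
  | true, .or A B => ev X Y true A ∨ ev X Y true B
  | false, .or A B => ev X Y false A ∧ ev X Y false B
  | true, .imp A B => ev X Y false A ∨ ev X Y true B
  | false, .imp A B => ev X Y true A ∧ ev X Y false B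
  | true, .box A => Fm.box A ∈ X
  | false, .box A => Fm.box A ∈ Y

def sat (X Y : Set Fm) (c : Cmp) : Prop :=
  (∀ A ∈ c.1, ev X Y true A) ∧ (∀ A ∈ c.2, ev X Y false A)

def axm (X Y : Set Fm) : Prop := ∃ m, Fm.var m ∈ X ∧ Fm.var m ∈ Y

def EE (Ax : EAx) (V : Cmp → Prop) (X : Set Fm) (e : Cmp × Cmp) : Prop :=
  ∃ S : Finset Fm, S.Nonempty ∧ (Ax.c = true ∨ S.card ≤ 1) ∧ (∀ A ∈ S, Fm.box A ∈ X) ∧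
    V (S.val + e.1.1, e.1.2) ∧ (Ax.m = true ∨ ∀ A ∈ S, V (e.2.1, A ::ₘ e.2.2))

def Cl (Ax : EAx) : ℕ → Set Fm → Set Fm → Prop
  | 0, X, Y => axm X Y
  | n + 1, X, Y => axm X Y ∨ ∃ B, Fm.box B ∈ Y ∧
      ((Ax.n = true ∧ ∀ X' Y', sat X' Y' (0, {B}) → Cl Ax n X' Y') ∨
        EE Ax (fun c => ∀ X' Y', sat X' Y' c → Cl Ax n X' Y') X ((0, {B}), ({B}, 0)))

def Val (Ax : EAx) (n : ℕ) (c : Cmp) : Prop := ∀ X Y, sat X Y c → Cl Ax n X Y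

def KK (Ax : EAx) (n : ℕ) : Option (Cmp × Cmp) → Set Fm → Set Fm → Prop
  | none, X, Y => Cl Ax n X Y
  | some e, X, Y => axm X Y ∨ EE Ax (Val Ax n) X e

theorem EE_mono {Ax V V' X e} (h : ∀ c, V c → V' c) : EE Ax V X e → EE Ax V' X e := by
  rintro ⟨S, h1, h2, h3, h4, h5⟩
  exact ⟨S, h1, h2, h3, h _ h4, h5.imp id fun h5 A hA => h _ (h5 A hA)⟩

theorem Cl_succ {Ax} : ∀ {n X Y}, Cl Ax n X Y → Cl Ax (n + 1) X Y
  | 0, _, _, h => Or.inl h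
  | n + 1, X, Y, h => by
    rcases h with h | ⟨B, hB, h⟩
    · exact Or.inl h
    · refine Or.inr ⟨B, hB, ?_⟩
      rcases h with ⟨hn, h⟩ | h
      · exact Or.inl ⟨hn, fun X' Y' hs => Cl_succ (h X' Y' hs)⟩
      · exact Or.inr (EE_mono (fun c hc X' Y' hs => Cl_succ (hc X' Y' hs)) h)

theorem Cl_mono {Ax n m X Y} (h : n ≤ m) (hc : Cl Ax n X Y) : Cl Ax m X Y := by
  induction h with
  | refl => exact hc
  | step _ ih => exact Cl_succ ih

theorem Val_mono {Ax n m c} (h : n ≤ m) (hc : Val Ax n c) : Val Ax m c :=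
  fun X Y hs => Cl_mono h (hc X Y hs)

theorem KK_mono {Ax n m ep X Y} (h : n ≤ m) (hc : KK Ax n ep X Y) : KK Ax m ep X Y := by
  cases ep with
  | none => exact Cl_mono h hc
  | some e => exact hc.imp id (EE_mono fun c => Val_mono h)

theorem KK_ax {Ax n ep X Y} (hc : axm X Y) : KK Ax n ep X Y := by
  cases ep with
  | none => exact Cl_mono (Nat.zero_le n) hc
  | some e => exact Or.inl hc

/-- Interpretation of linear nested sequents. -/
def Den (Ax : EAx) (ep : Option (Cmp × Cmp)) : List Cmp → Prop
  | [] => False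
  | [c] => ∃ n, ∀ X Y, sat X Y c → KK Ax n ep X Y
  | c :: d :: t => Val Ax 0 c ∨ Den Ax ep (d :: t)

theorem den_cons {Ax ep c t} (ht : t ≠ []) :
    Den Ax ep (c :: t) ↔ Val Ax 0 c ∨ Den Ax ep t := by
  cases t with
  | nil => exact absurd rfl ht
  | cons d t => rfl

theorem den_append {Ax ep G t} (ht : t ≠ []) :
    Den Ax ep (G ++ t) ↔ (∃ c ∈ G, Val Ax 0 c) ∨ Den Ax ep t := by
  induction G with
  | nil => simp
  | cons c G ih =>
    rw [List.cons_append, den_cons (by simp [ht]), ih]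
    simp [or_assoc]

theorem den_prop2 {Ax ep pre post} {c c1 c2 : Cmp}
    (h : ∀ X Y, sat X Y c → sat X Y c1 ∨ sat X Y c2)
    (h1 : Den Ax ep (pre ++ c1 :: post)) (h2 : Den Ax ep (pre ++ c2 :: post)) :
    Den Ax ep (pre ++ c :: post) := by
  rw [den_append (by simp)] at *
  rcases h1 with h1 | h1
  · exact Or.inl h1
  rcases h2 with h2 | h2
  · exact Or.inl h2
  refine Or.inr ?_
  cases post with
  | nil =>
    obtain ⟨n1, h1⟩ := h1
    obtain ⟨n2, h2⟩ := h2
    refine ⟨max n1 n2, fun X Y hs => ?_⟩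
    rcases h X Y hs with h | h
    · exact KK_mono (le_max_left _ _) (h1 X Y h)
    · exact KK_mono (le_max_right _ _) (h2 X Y h)
  | cons d t =>
    rcases h1 with h1 | h1
    · rcases h2 with h2 | h2
      · refine Or.inl fun X Y hs => ?_
        rcases h X Y hs with h | h
        · exact h1 X Y h
        · exact h2 X Y h
      · exact Or.inr h2
    · exact Or.inr h1

theorem den_prop1 {Ax ep pre post} {c c1 : Cmp}
    (h : ∀ X Y, sat X Y c → sat X Y c1)
    (h1 : Den Ax ep (pre ++ c1 :: post)) :
    Den Ax ep (pre ++ c :: post) :=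
  den_prop2 (fun X Y hs => Or.inl (h X Y hs)) h1 h1

theorem den_ax {Ax ep pre post} {c : Cmp}
    (h : ∀ X Y, sat X Y c → axm X Y) :
    Den Ax ep (pre ++ c :: post) := by
  rw [den_append (by simp)]
  refine Or.inr ?_
  cases post with
  | nil => exact ⟨0, fun X Y hs => KK_ax (h X Y hs)⟩
  | cons d t => exact Or.inl h

theorem Val_congr {Ax n} {c d : Cmp} (h : ∀ X Y, sat X Y d → sat X Y c)
    (hc : Val Ax n c) : Val Ax n d := fun X Y hs => hc X Y (h X Y hs)

theorem sound {Ax} {s : LNSe} (h : ED Ax false false s) : Den Ax s.2 s.1 := by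
  induction h with
  | init => exact den_ax fun X Y hs => ⟨_, by simpa [ev] using hs.1 _ (Multiset.mem_cons_self _ _),
      by simpa [ev] using hs.2 _ (Multiset.mem_cons_self _ _)⟩
  | botL => exact den_ax fun X Y hs => by simp [sat, ev] at hs
  | topR => exact den_ax fun X Y hs => by simp [sat, ev] at hs
  | negL _ ih => exact den_prop1 (fun X Y hs => by simp [sat, ev] at hs ⊢; tauto) ih
  | negR _ ih => exact den_prop1 (fun X Y hs => by simp [sat, ev] at hs ⊢; tauto) ih
  | andL _ ih => exact den_prop1 (fun X Y hs => by simp [sat, ev] at hs ⊢; tauto) ih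
  | orR _ ih => exact den_prop1 (fun X Y hs => by simp [sat, ev] at hs ⊢; tauto) ih
  | impR _ ih => exact den_prop1 (fun X Y hs => by simp [sat, ev] at hs ⊢; tauto) ih
  | andR _ _ ih1 ih2 => exact den_prop2 (fun X Y hs => by simp [sat, ev] at hs ⊢; tauto) ih1 ih2
  | orL _ _ ih1 ih2 => exact den_prop2 (fun X Y hs => by simp [sat, ev] at hs ⊢; tauto) ih1 ih2
  | impL _ _ ih1 ih2 => exact den_prop2 (fun X Y hs => by simp [sat, ev] at hs ⊢; tauto) ih1 ih2
  | conL h => cases h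
  | conR h => cases h
  | wkL h => cases h
  | wkR h => cases h
  | @boxRe G Γ Δ B _ ih =>
    simp only at ih ⊢
    rw [den_append (by simp)] at *
    refine ih.imp id ?_
    rintro ⟨n, ih⟩
    refine ⟨n + 1, fun X Y hs => ?_⟩
    have hs' : sat X Y (Γ, Δ) := by simp [sat] at hs ⊢; tauto
    have hB : Fm.box B ∈ Y := by simpa [ev] using hs.2 _ (Multiset.mem_cons_self _ _)
    rcases ih X Y hs' with h | h
    · exact Or.inl h
    · exact Or.inr ⟨B, hB, Or.inr h⟩
  | @ruleN G Γ Δ B hN _ ih =>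
    simp only at ih ⊢
    rw [den_append (by simp)] at *
    refine ih.imp id ?_
    have key : ∀ X Y, sat X Y (Γ, Fm.box B ::ₘ Δ) → sat X Y (Γ, Δ) ∧ Fm.box B ∈ Y := by
      intro X Y hs; simp [sat, ev] at hs ⊢; tauto
    rintro (ih | ⟨n, ih⟩)
    · exact ⟨0, fun X Y hs => ih X Y (key X Y hs).1⟩
    · exact ⟨n + 1, fun X Y hs => Or.inr ⟨B, (key X Y hs).2, Or.inl ⟨hN, ih⟩⟩⟩
  | @ruleM c G Sg Pp Om Th hM _ ih =>
    simp only at ih ⊢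
    obtain ⟨G', d, hd⟩ : ∃ G' d, c :: G = G' ++ [d] :=
      ⟨_, _, (List.dropLast_append_getLast (List.cons_ne_nil c G)).symm⟩
    rw [hd, den_append (by simp)] at ih ⊢
    refine ih.imp id ?_
    rintro ⟨n, ih⟩
    refine ⟨n, fun X Y hs => (ih X Y hs).imp id ?_⟩
    rintro ⟨S, h1, h2, h3, h4, h5⟩
    exact ⟨S, h1, h2, h3, h4, Or.inl hM⟩
  | @boxLe G Γ Δ Sg Pp Om Th A _ _ ih1 ih2 =>
    simp only at ih1 ih2 ⊢
    rw [den_append (by simp)] at *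
    rcases ih1 with h | ih1
    · exact Or.inl h
    rcases ih2 with h | ih2
    · exact Or.inl h
    have key : ∀ X Y, sat X Y (Fm.box A ::ₘ Γ, Δ) → sat X Y (Γ, Δ) ∧ Fm.box A ∈ X := by
      intro X Y hs; simp [sat, ev] at hs ⊢; tauto
    refine Or.inr ?_
    rcases ih1 with ih1 | ⟨n1, ih1⟩
    · exact ⟨0, fun X Y hs => Or.inl (ih1 X Y (key X Y hs).1)⟩
    rcases ih2 with ih2 | ⟨n2, ih2⟩
    · exact ⟨0, fun X Y hs => Or.inl (ih2 X Y (key X Y hs).1)⟩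
    refine ⟨max n1 n2, fun X Y hs => Or.inr ⟨{A}, by simp, by simp, ?_, ?_, Or.inr ?_⟩⟩
    · simpa using (key X Y hs).2
    · refine Val_mono (le_max_left _ _) ?_
      have ih1' : Val Ax n1 (A ::ₘ Sg, Pp) := ih1
      simpa using ih1'
    · intro A' hA'
      refine Val_mono (le_max_right n1 n2) ?_
      rw [Finset.mem_singleton] at hA'
      subst hA'
      exact ih2
  | @ruleC G Γ Δ Sg Pp Om Th A hC _ _ ih1 ih2 =>
    simp only at ih1 ih2 ⊢
    rw [den_append (by simp)] at *
    rcases ih1 with h | ⟨n1, ih1⟩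
    · exact Or.inl h
    rcases ih2 with h | ih2
    · exact Or.inl h
    have key : ∀ X Y, sat X Y (Fm.box A ::ₘ Γ, Δ) → sat X Y (Γ, Δ) ∧ Fm.box A ∈ X := by
      intro X Y hs; simp [sat, ev] at hs ⊢; tauto
    refine Or.inr ?_
    rcases ih2 with ih2 | ⟨n2, ih2⟩
    · exact ⟨0, fun X Y hs => Or.inl (ih2 X Y (key X Y hs).1)⟩
    refine ⟨max n1 n2, fun X Y hs => (ih1 X Y (key X Y hs).1).imp id ?_⟩
    rintro ⟨S, h1, h2, h3, h4, h5⟩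
    classical
    refine ⟨insert A S, by simp, Or.inl hC, ?_, ?_, ?_⟩
    · intro A' hA'
      rcases Finset.mem_insert.1 hA' with rfl | hA'
      · exact (key X Y hs).2
      · exact h3 _ hA'
    · refine Val_mono (le_max_left _ _) (Val_congr ?_ h4)
      rintro X' Y' ⟨h6, h7⟩
      refine ⟨fun F hF => h6 F ?_, h7⟩
      simp only [Multiset.mem_add, Finset.mem_val, Finset.mem_insert, Multiset.mem_cons] at hF ⊢
      tauto
    · refine h5.imp id fun h5 A' hA' => ?_
      rcases Finset.mem_insert.1 hA' with rfl | hA'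
      · exact Val_mono (le_max_right n1 n2) ih2
      · exact Val_mono (le_max_left _ _) (h5 _ hA')

def sz : Fm → ℕ
  | .var _ => 1
  | .bot => 1
  | .top => 1
  | .neg A => sz A + 1
  | .and A B => sz A + sz B + 1
  | .or A B => sz A + sz B + 1
  | .imp A B => sz A + sz B + 1
  | .box A => sz A + 1

theorem reduce {Ax pre post ep} (P : Set Fm → Set Fm → Prop)
    (hP : ∀ Γ Δ : Multiset Fm, P {A | A ∈ Γ} {A | A ∈ Δ} →
      ED Ax false false (pre ++ (Γ, Δ) :: post, ep)) :
    ∀ (k : ℕ) (Γ Δ : Multiset Fm), (Γ.map sz).sum + (Δ.map sz).sum ≤ k →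
      (∀ X Y, sat X Y (Γ, Δ) → P X Y) →
      ED Ax false false (pre ++ (Γ, Δ) :: post, ep) := by
  intro k
  induction k with
  | zero =>
    intro Γ Δ hk h
    have aux : ∀ A, 0 < sz A := fun A => by cases A <;> simp [sz]
    have h1 : Γ = 0 := by
      by_contra hne
      obtain ⟨A, hA⟩ := Multiset.exists_mem_of_ne_zero hne
      obtain ⟨Γ, rfl⟩ := Multiset.exists_cons_of_mem hA
      have := aux A
      simp at hk; omega
    have h2 : Δ = 0 := by
      by_contra hne
      obtain ⟨A, hA⟩ := Multiset.exists_mem_of_ne_zero hne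
      obtain ⟨Γ, rfl⟩ := Multiset.exists_cons_of_mem hA
      have := aux A
      simp at hk; omega
    subst h1 h2
    exact hP _ _ (h _ _ (by simp [sat]))
  | succ k ih =>
    intro Γ Δ hk h
    by_cases hs : sat {A | A ∈ Γ} {A | A ∈ Δ} (Γ, Δ)
    · exact hP _ _ (h _ _ hs)
    · simp only [sat, not_and_or, not_forall] at hs
      rcases hs with ⟨A, hA, hs⟩ | ⟨A, hA, hs⟩
      · cases A with
        | var n => simp [ev] at hs; exact absurd hA hs
        | top => simp [ev] at hs
        | box n => simp [ev] at hs; exact absurd hA hs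
        | bot =>
          obtain ⟨Γ, rfl⟩ := Multiset.exists_cons_of_mem hA
          exact ED.botL
        | neg A =>
          obtain ⟨Γ, rfl⟩ := Multiset.exists_cons_of_mem hA
          simp [sz] at hk
          exact ED.negL (ih _ _ (by simp; omega) fun X Y hs => h X Y (by
            simp [sat, ev] at hs ⊢; tauto))
        | and A B =>
          obtain ⟨Γ, rfl⟩ := Multiset.exists_cons_of_mem hA
          simp [sz] at hk
          exact ED.andL (ih _ _ (by simp; omega) fun X Y hs => h X Y (by
            simp [sat, ev] at hs ⊢; tauto))
        | or A B =>
          obtain ⟨Γ, rfl⟩ := Multiset.exists_cons_of_mem hA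
          simp [sz] at hk
          exact ED.orL (ih _ _ (by simp; omega) fun X Y hs => h X Y (by
            simp [sat, ev] at hs ⊢; tauto)) (ih _ _ (by simp; omega) fun X Y hs => h X Y (by
            simp [sat, ev] at hs ⊢; tauto))
        | imp A B =>
          obtain ⟨Γ, rfl⟩ := Multiset.exists_cons_of_mem hA
          simp [sz] at hk
          exact ED.impL (ih _ _ (by simp; omega) fun X Y hs => h X Y (by
            simp [sat, ev] at hs ⊢; tauto)) (ih _ _ (by simp; omega) fun X Y hs => h X Y (by
            simp [sat, ev] at hs ⊢; tauto))
      · cases A with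
        | var n => simp [ev] at hs; exact absurd hA hs
        | bot => simp [ev] at hs
        | box n => simp [ev] at hs; exact absurd hA hs
        | top =>
          obtain ⟨Δ, rfl⟩ := Multiset.exists_cons_of_mem hA
          exact ED.topR
        | neg A =>
          obtain ⟨Δ, rfl⟩ := Multiset.exists_cons_of_mem hA
          simp [sz] at hk
          exact ED.negR (ih _ _ (by simp; omega) fun X Y hs => h X Y (by
            simp [sat, ev] at hs ⊢; tauto))
        | or A B =>
          obtain ⟨Δ, rfl⟩ := Multiset.exists_cons_of_mem hA
          simp [sz] at hk
          exact ED.orR (ih _ _ (by simp; omega) fun X Y hs => h X Y (by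
            simp [sat, ev] at hs ⊢; tauto))
        | imp A B =>
          obtain ⟨Δ, rfl⟩ := Multiset.exists_cons_of_mem hA
          simp [sz] at hk
          exact ED.impR (ih _ _ (by simp; omega) fun X Y hs => h X Y (by
            simp [sat, ev] at hs ⊢; tauto))
        | and A B =>
          obtain ⟨Δ, rfl⟩ := Multiset.exists_cons_of_mem hA
          simp [sz] at hk
          exact ED.andR (ih _ _ (by simp; omega) fun X Y hs => h X Y (by
            simp [sat, ev] at hs ⊢; tauto)) (ih _ _ (by simp; omega) fun X Y hs => h X Y (by
            simp [sat, ev] at hs ⊢; tauto))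

theorem of_axm {Ax pre post ep} {Γ Δ : Multiset Fm} (h : axm {A | A ∈ Γ} {A | A ∈ Δ}) :
    ED Ax false false (pre ++ (Γ, Δ) :: post, ep) := by
  obtain ⟨m, h1, h2⟩ := h
  obtain ⟨Γ, rfl⟩ := Multiset.exists_cons_of_mem h1
  obtain ⟨Δ, rfl⟩ := Multiset.exists_cons_of_mem h2
  exact ED.init

theorem of_Val0 {Ax pre post ep c} (h : Val Ax 0 c) :
    ED Ax false false (pre ++ c :: post, ep) :=
  reduce axm (fun _ _ => of_axm) _ c.1 c.2 le_rfl h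

theorem of_boxes {Ax : EAx} {G Δ Pp Om Th} (S : Multiset Fm) : ∀ (Γ Sg : Multiset Fm), S ≠ 0 →
    (Ax.c = true ∨ Multiset.card S ≤ 1) → S.map Fm.box ≤ Γ →
    (∀ G, ED Ax false false (G ++ [(S + Sg, Pp)], none)) →
    (∀ A ∈ S, ∀ G, ED Ax false false (G ++ [(Om, A ::ₘ Th)], none)) →
    ED Ax false false (G ++ [(Γ, Δ)], some ((Sg, Pp), (Om, Th))) := by
  induction S using Multiset.induction_on with
  | empty => intro _ _ h; exact absurd rfl h
  | cons A S ih =>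
    intro Γ Sg _ hc hle h1 h2
    obtain ⟨Γ', rfl⟩ := Multiset.le_iff_exists_add.1 hle
    rw [Multiset.map_cons, Multiset.cons_add]
    have h2' := h2 A (by simp) (G ++ [(S.map Fm.box + Γ', Δ)])
    rw [List.append_assoc] at h2'
    by_cases hS : S = 0
    · subst hS
      have h1' := h1 (G ++ [((0 : Multiset Fm).map Fm.box + Γ', Δ)])
      rw [List.append_assoc] at h1'
      refine ED.boxLe ?_ h2'
      simpa using h1'
    · have hc' : Ax.c = true := by
        refine hc.resolve_right fun hc => hS ?_
        rw [Multiset.card_cons] at hc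
        exact Multiset.card_eq_zero.1 (by omega)
      refine ED.ruleC hc' (ih _ _ hS (Or.inl hc') (by simp) (fun G => ?_)
        (fun A' hA' => h2 A' (by simp [hA']))) h2'
      have := h1 G
      rwa [Multiset.cons_add, ← Multiset.add_cons] at this

theorem of_EE {Ax n G Γ Δ e}
    (hV : ∀ G c, Val Ax n c → ED Ax false false (G ++ [c], none))
    (h : EE Ax (Val Ax n) {A | A ∈ Γ} e) :
    ED Ax false false (G ++ [(Γ, Δ)], some e) := by
  obtain ⟨⟨Sg, Pp⟩, ⟨Om, Th⟩⟩ := e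
  obtain ⟨S, h1, h2, h3, h4, h5⟩ := h
  have hS : S.val ≠ 0 := by simpa using h1.ne_empty
  have hle : S.val.map Fm.box ≤ Γ := by
    rw [Multiset.le_iff_subset (S.nodup.map (fun a b h => by injection h))]
    intro F hF
    obtain ⟨A, hA, rfl⟩ := Multiset.mem_map.1 hF
    exact h3 A hA
  rcases h5 with h5 | h5
  · have := of_boxes (Ax := Ax) (G := G) (Δ := Δ) (Pp := Pp) (Om := Fm.bot ::ₘ Om) (Th := Th)
      S.val Γ Sg hS h2 hle (fun G => hV _ _ h4) (fun A _ G => ED.botL)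
    cases G with
    | nil => exact ED.ruleM h5 this
    | cons c G => exact ED.ruleM h5 this
  · exact of_boxes S.val Γ Sg hS h2 hle (fun G => hV _ _ h4) (fun A hA G => hV _ _ (h5 A hA))

theorem of_Val {Ax} (n : ℕ) : ∀ G c, Val Ax n c → ED Ax false false (G ++ [c], none) := by
  induction n with
  | zero => intro G c h; exact of_Val0 h
  | succ n ih =>
    intro G c h
    refine reduce (Cl Ax (n + 1)) ?_ _ c.1 c.2 le_rfl h
    rintro Γ Δ (h | ⟨B, hB, h⟩)
    · exact of_axm h
    · obtain ⟨Δ, rfl⟩ := Multiset.exists_cons_of_mem hB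
      rcases h with ⟨hN, h⟩ | h
      · refine ED.ruleN hN ?_
        have := ih (G ++ [(Γ, Δ)]) _ h
        rwa [List.append_assoc] at this
      · exact ED.boxRe (of_EE ih h)

theorem complete {Ax ep} : ∀ (L G : List Cmp), Den Ax ep L → ED Ax false false (G ++ L, ep)
  | [], _, h => h.elim
  | [c], G, h => by
    obtain ⟨n, h⟩ := h
    cases ep with
    | none => exact of_Val n G c h
    | some e =>
      refine reduce (KK Ax n (some e)) ?_ _ c.1 c.2 le_rfl h
      rintro Γ Δ (h | h)
      · exact of_axm h
      · exact of_EE (of_Val n) h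
  | c :: d :: t, G, h => by
    rcases h with h | h
    · exact of_Val0 h
    · have := complete (d :: t) (G ++ [c]) h
      rwa [List.append_assoc] at this

end EDSem

/-- Admissibility of contraction in the calculus `LNS_E𝒜` (for every
`𝒜 ⊆ {M, C, N}`): if `S{Γ, A, A ⇒ Δ}` (respectively `S{Γ ⇒ Δ, A, A}`) is
derivable in `LNS_E𝒜`, then so is `S{Γ, A ⇒ Δ}` (respectively
`S{Γ ⇒ Δ, A}`). -/
theorem contraction_admissible (Ax : EAx) :
    (∀ (pre post : List Cmp) (ep : Option (Cmp × Cmp)) (Γ Δ : Multiset Fm) (A : Fm),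
      ED Ax false false (pre ++ (A ::ₘ A ::ₘ Γ, Δ) :: post, ep) →
      ED Ax false false (pre ++ (A ::ₘ Γ, Δ) :: post, ep)) ∧
    (∀ (pre post : List Cmp) (ep : Option (Cmp × Cmp)) (Γ Δ : Multiset Fm) (A : Fm),
      ED Ax false false (pre ++ (Γ, A ::ₘ A ::ₘ Δ) :: post, ep) →
      ED Ax false false (pre ++ (Γ, A ::ₘ Δ) :: post, ep)) := by
  constructor
  · intro pre post ep Γ Δ A h
    refine EDSem.complete _ [] (EDSem.den_prop1 (fun X Y hs => ?_) (EDSem.sound h))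
    simp [EDSem.sat] at hs ⊢; tauto
  · intro pre post ep Γ Δ A h
    refine EDSem.complete _ [] (EDSem.den_prop1 (fun X Y hs => ?_) (EDSem.sound h))
    simp [EDSem.sat] at hs ⊢; tauto
end
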